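/- There exists an integer Δ₀ ≥ 0 such that every finite simple graph G with maximum degree Δ ≥ Δ₀ and with no isolated edge admits a proper edge colouring c using at most Δ + 19 colours which is adjacent vertex distinguishing, i.e., S_c(u) ≠ S_c(v) for every edge uv of G. -/

import Mathlib

/-- A proper edge colouring: distinct incident edges of `G` get distinct colours. -/
def ProperEdgeColoring {V : Type*} (G : SimpleGraph V) (c : Sym2 V → ℕ) : Prop :=
  ∀ e₁ ∈ G.edgeSet, ∀ e₂ ∈ G.edgeSet, e₁ ≠ e₂ → (∃ v, v ∈ e₁ ∧ v ∈ e₂) → c e₁ ≠ c e₂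

/-- `colorSet G c u` is the set of colours appearing on edges incident to `u`. -/
def colorSet {V : Type*} (G : SimpleGraph V) (c : Sym2 V → ℕ) (u : V) : Set ℕ :=
  {n | ∃ v, G.Adj u v ∧ c s(u, v) = n}

/-!
Call a vertex high if its degree exceeds `9Δ/20`. After contraction of the isolated edges of the
graph induced by the low vertices, Vizing's fan argument still colours the edges with a high end
properly with `Δ + 1` colours: contraction doubles edges only at low vertices. Each high vertex then
selects two of its edges so that no vertex receives more than 15 selected edges from others. The
selected edges, at most 17 at each vertex, are recoloured with 18 new colours, and a suitable
selection makes the ends of every edge between high vertices see different sets of old colours.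

An edge between low vertices meets so few edges that about `Δ/10` of the colours are to spare. These
edges can therefore be coloured so that the ends of each edge that is not isolated among them are
distinguished. The ends of an isolated one see disjoint sets of colours on their other edges because
of the contraction, and a high vertex is distinguished from a low one by its degree.

The selection and the second colouring both come from Rosenfeld's counting argument, which takes the
place of the local lemma: if every extension of a partial solution by one more value can fail in few
ways only, each being undone by forgetting a few values, then the number of partial solutions grows
by a constant factor with every step.
-/

namespace AVD

open Finset
open scoped Classical

section Counting

variable {I C : Type*}

/-- The induction of Rosenfeld's counting argument, where `N X` is the number of partial solutions
with domain `X`. -/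
theorem pow_card_mul_sdiff_le {N : Finset I → ℝ} {β : ℝ} (hβ : 0 ≤ β)
    (insert_le : ∀ X w, w ∉ X → (∀ T ⊆ X, β ^ #T * N (X \ T) ≤ N X) → β * N X ≤ N (insert w X))
    {X T : Finset I} (hT : T ⊆ X) : β ^ #T * N (X \ T) ≤ N X := by
  induction X using Finset.strongInduction generalizing T with
  | H X ih =>
    obtain rfl | ⟨t, ht⟩ := T.eq_empty_or_nonempty
    · simp
    have ih_erase {T' : Finset I} (hT' : T' ⊆ X.erase t) := ih _ (erase_ssubset (hT ht)) hT'
    have hsdiff : X.erase t \ T.erase t = X \ T := by grind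
    calc β ^ #T * N (X \ T) = β * (β ^ #(T.erase t) * N (X.erase t \ T.erase t)) := by
          rw [hsdiff, ← card_erase_add_one ht, pow_succ]; ring
      _ ≤ β * N (X.erase t) := by gcongr; exact ih_erase (erase_subset_erase t hT)
      _ ≤ N (insert t (X.erase t)) := insert_le _ _ (notMem_erase t X) fun _ => ih_erase
      _ = N X := by rw [insert_erase (hT ht)]

/-- A type of event which may spoil a partial assignment `f : I → Option C` when an index receives
its value. Once the values on `released` and at that index are forgotten, at most `bound`
assignments for which the event `occurs` have the same remaining values. -/
structure Obstruction (I C : Type*) where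
  released : Finset I
  bound : ℕ
  occurs : (I → Option C) → Prop

/-- The share of the candidate values at an index that an obstruction can spoil, when each released
index can be assigned in `β` ways on average. -/
noncomputable def Obstruction.cost (τ : Obstruction I C) (β : ℝ) : ℝ :=
  τ.bound / β ^ #τ.released

/-- The obstruction `τ` occurs for `f` and can be undone by forgetting assigned values of indices
other than `w`. -/
structure Obstruction.Hits (τ : Obstruction I C) (w : I) (f : I → Option C) : Prop where
  occurs : τ.occurs f
  notMem_released : w ∉ τ.released
  ne_none : ∀ i ∈ τ.released, f i ≠ none

/-- The partial assignment `f` respects the lists `O` and arises from one that is not `Bad` by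
giving a value to `w`. -/
structure IsExtensionAt (O : I → Finset C) (Bad : (I → Option C) → Prop) (w : I)
    (f : I → Option C) : Prop where
  mem_list : ∀ i, ∀ c ∈ f i, c ∈ O i
  ne_none : f w ≠ none
  not_bad : ¬ Bad (Function.update f w none)

theorem IsExtensionAt.exists_not_bad {O : I → Finset C} {Bad : (I → Option C) → Prop} {w : I}
    {f : I → Option C} (hf : IsExtensionAt O Bad w f) : ∃ g, (∀ i ≠ w, f i = g i) ∧ ¬ Bad g :=
  ⟨Function.update f w none, fun _ hi => (Function.update_of_ne hi _ _).symm, hf.not_bad⟩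

/-- The number `τ.bound` is as announced for extensions at `w`. -/
def Obstruction.IsBounded (τ : Obstruction I C) (O : I → Finset C) (Bad : (I → Option C) → Prop)
    (w : I) : Prop :=
  ∀ (g : I → Option C) (A : Finset (I → Option C)),
    (∀ f ∈ A, IsExtensionAt O Bad w f ∧ τ.occurs f ∧ ∀ i ≠ w, i ∉ τ.released → f i = g i) →
      #A ≤ τ.bound

theorem sum_cost_image_le {ι : Type*} {β x : ℝ} (s : Finset ι) {τ : ι → Obstruction I C}
    (hβ : 0 ≤ β) (hτ : ∀ a ∈ s, (τ a).cost β = x) :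
    ∑ a ∈ s.image τ, a.cost β ≤ #s * x := by
  have hcost : ∀ a ∈ s.image τ, a.cost β = x := by simpa using hτ
  obtain rfl | ⟨a, ha⟩ := s.eq_empty_or_nonempty
  · simp
  have hx : 0 ≤ x := by rw [← hτ a ha, Obstruction.cost]; positivity
  rw [sum_congr rfl hcost, sum_const, nsmul_eq_mul]
  gcongr
  exact card_image_le

theorem sum_cost_union_le {β : ℝ} (s t : Finset (Obstruction I C)) (hβ : 0 ≤ β) :
    ∑ τ ∈ s ∪ t, τ.cost β ≤ ∑ τ ∈ s, τ.cost β + ∑ τ ∈ t, τ.cost β := by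
  rw [← sum_union_inter]
  refine le_add_of_nonneg_right (sum_nonneg fun τ _ => ?_)
  rw [Obstruction.cost]
  positivity

variable {O : I → Finset C} {Bad : (I → Option C) → Prop}

section Fintype

variable [Fintype I] [Fintype C]

/-- The partial assignments with domain `X` which respect the lists `O` and are not `Bad`. -/
noncomputable def goodAssignments (O : I → Finset C) (Bad : (I → Option C) → Prop)
    (X : Finset I) : Finset (I → Option C) :=
  {f | (∀ i, ∀ c ∈ f i, c ∈ O i) ∧ (∀ i, f i ≠ none ↔ i ∈ X) ∧ ¬ Bad f}

/-- The extensions at `w` of the good assignments with domain `X`. -/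
noncomputable def extensions (O : I → Finset C) (Bad : (I → Option C) → Prop)
    (X : Finset I) (w : I) : Finset (I → Option C) :=
  {f | IsExtensionAt O Bad w f ∧ ∀ i, f i ≠ none ↔ i ∈ insert w X}

theorem mem_goodAssignments {X : Finset I} {f : I → Option C} :
    f ∈ goodAssignments O Bad X ↔
      (∀ i, ∀ c ∈ f i, c ∈ O i) ∧ (∀ i, f i ≠ none ↔ i ∈ X) ∧ ¬ Bad f := by
  simp [goodAssignments]

theorem mem_extensions {X : Finset I} {w : I} {f : I → Option C} :
    f ∈ extensions O Bad X w ↔ IsExtensionAt O Bad w f ∧ ∀ i, f i ≠ none ↔ i ∈ insert w X := by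
  simp [extensions]

theorem card_goodAssignments_mul_le {X : Finset I} {w : I} (hw : w ∉ X) :
    #(goodAssignments O Bad X) * #(O w) ≤ #(extensions O Bad X w) := by
  have eq_none {f : I → Option C} (hf : f ∈ goodAssignments O Bad X) : f w = none := by
    by_contra h
    exact hw (((mem_goodAssignments.1 hf).2.1 w).1 h)
  rw [← card_product]
  refine card_le_card_of_injOn (fun p => Function.update p.1 w (some p.2)) ?_ ?_
  · rintro ⟨f, c⟩ hfc
    obtain ⟨hf, hc⟩ := mem_product.1 hfc
    obtain ⟨hlist, hdom, hbad⟩ := mem_goodAssignments.1 hf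
    refine mem_extensions.2 ⟨⟨fun i c' hc' => ?_, by simp, ?_⟩, fun i => ?_⟩
    · grind [Function.update_apply]
    · rwa [Function.update_idem, ← eq_none hf, Function.update_eq_self]
    · grind [Function.update_apply]
  · rintro ⟨f, c⟩ hf ⟨f', c'⟩ hf' heq
    have hf : f w = none := eq_none (mem_product.1 hf).1
    have hf' : f' w = none := eq_none (mem_product.1 hf').1
    have hcc' : c = c' := by simpa using congrFun heq w
    have hff' : f = f' := by
      rw [← Function.update_eq_self w f, ← Function.update_eq_self w f', hf, hf']
      simpa using congrArg (Function.update · w none) heq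
    rw [hcc', hff']

/-- Forgetting the released values maps the spoilt extensions to good assignments. -/
theorem card_filter_hits_le (mono : ∀ f g : I → Option C, (∀ i, ∀ c ∈ f i, c ∈ g i) → Bad f → Bad g)
    {τ : Obstruction I C} {w : I} (hτ : τ.IsBounded O Bad w) {X : Finset I} (hw : w ∉ X) :
    #{f ∈ extensions O Bad X w | τ.Hits w f} ≤
      τ.bound * #(goodAssignments O Bad (X \ τ.released)) := by
  let forget (f : I → Option C) (i : I) : Option C :=
    if i = w ∨ i ∈ τ.released then none else f i
  have forget_of_notMem {f i} (hi : i ≠ w) (hi' : i ∉ τ.released) : forget f i = f i :=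
    if_neg (not_or.2 ⟨hi, hi'⟩)
  refine card_le_mul_card_image_of_maps_to (f := forget) (fun f hf => ?_) _ fun g _ => ?_
  · obtain ⟨hf, -⟩ := mem_filter.1 hf
    obtain ⟨⟨hlist, -, hgood⟩, hdom⟩ := mem_extensions.1 hf
    refine mem_goodAssignments.2 ⟨fun i c hc => ?_, fun i => ?_, fun hbad => hgood ?_⟩
    · simp only [forget] at hc
      split_ifs at hc
      · cases hc
      · exact hlist i c hc
    · grind
    · refine mono _ _ (fun i c hc => ?_) hbad
      grind [Function.update_apply]
  · refine hτ g _ fun f hf => ?_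
    simp only [mem_filter] at hf
    obtain ⟨⟨hf, hits⟩, rfl⟩ := hf
    exact ⟨(mem_extensions.1 hf).1, hits.occurs, fun i hi hi' => (forget_of_notMem hi hi').symm⟩

theorem released_subset_of_hits {τ : Obstruction I C} {X : Finset I} {w : I} {f : I → Option C}
    (hf : f ∈ extensions O Bad X w) (hits : τ.Hits w f) : τ.released ⊆ X := fun i hi =>
  mem_of_mem_insert_of_ne (((mem_extensions.1 hf).2 i).1 (hits.ne_none i hi))
    (ne_of_mem_of_not_mem hi hits.notMem_released)

theorem card_filter_hits_le_cost_mul {β : ℝ} (hβ : 0 < β)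
    (mono : ∀ f g : I → Option C, (∀ i, ∀ c ∈ f i, c ∈ g i) → Bad f → Bad g)
    {τ : Obstruction I C} {w : I} (hτ : τ.IsBounded O Bad w) {X : Finset I} (hw : w ∉ X)
    (hX : ∀ T ⊆ X, β ^ #T * (#(goodAssignments O Bad (X \ T)) : ℝ) ≤ #(goodAssignments O Bad X)) :
    (#{f ∈ extensions O Bad X w | τ.Hits w f} : ℝ) ≤ τ.cost β * #(goodAssignments O Bad X) := by
  obtain hempty | ⟨f, hf⟩ := {f ∈ extensions O Bad X w | τ.Hits w f}.eq_empty_or_nonempty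
  · rw [hempty, card_empty, Nat.cast_zero, Obstruction.cost]
    positivity
  obtain ⟨hf, hits⟩ := mem_filter.1 hf
  calc (#{f ∈ extensions O Bad X w | τ.Hits w f} : ℝ)
      ≤ τ.bound * #(goodAssignments O Bad (X \ τ.released)) :=
        mod_cast card_filter_hits_le mono hτ hw
    _ ≤ τ.bound * (#(goodAssignments O Bad X) / β ^ #τ.released) := by
        gcongr
        rw [le_div_iff₀' (by positivity)]
        exact hX _ (released_subset_of_hits hf hits)
    _ = τ.cost β * #(goodAssignments O Bad X) := by rw [Obstruction.cost]; ring

theorem extensions_subset {E : Finset (Obstruction I C)} {X : Finset I} {w : I}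
    (hits : ∀ f, IsExtensionAt O Bad w f → Bad f → ∃ τ ∈ E, τ.Hits w f) :
    extensions O Bad X w ⊆
      goodAssignments O Bad (insert w X) ∪
        E.biUnion fun τ => {f ∈ extensions O Bad X w | τ.Hits w f} := by
  intro f hf
  obtain ⟨hext, hdom⟩ := mem_extensions.1 hf
  by_cases hbad : Bad f
  · obtain ⟨τ, hτ, h⟩ := hits f hext hbad
    exact mem_union_right _ (mem_biUnion.2 ⟨τ, hτ, mem_filter.2 ⟨hf, h⟩⟩)
  · exact mem_union_left _ (mem_goodAssignments.2 ⟨hext.mem_list, hdom, hbad⟩)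

end Fintype

/-- **Rosenfeld's counting lemma**: the number of good assignments grows by a factor of at least `β`
with every new index. -/
theorem exists_assignment_not_bad [Finite I] [Finite C] {β : ℝ} (hβ : 0 < β)
    (mono : ∀ f g : I → Option C, (∀ i, ∀ c ∈ f i, c ∈ g i) → Bad f → Bad g)
    (not_bad_none : ¬ Bad fun _ => none) (E : I → Finset (Obstruction I C))
    (bounded : ∀ w, ∀ τ ∈ E w, τ.IsBounded O Bad w)
    (hits : ∀ w f, IsExtensionAt O Bad w f → Bad f → ∃ τ ∈ E w, τ.Hits w f)
    (sum_le : ∀ w, β + ∑ τ ∈ E w, τ.cost β ≤ #(O w)) :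
    ∃ f : I → C, (∀ i, f i ∈ O i) ∧ ¬ Bad fun i => some (f i) := by
  cases nonempty_fintype I
  cases nonempty_fintype C
  have insert_le : ∀ X w, w ∉ X →
      (∀ T ⊆ X, β ^ #T * (#(goodAssignments O Bad (X \ T)) : ℝ) ≤ #(goodAssignments O Bad X)) →
      β * #(goodAssignments O Bad X) ≤ (#(goodAssignments O Bad (insert w X)) : ℝ) := by
    intro X w hw hX
    have hcount : (#(goodAssignments O Bad X) * #(O w) : ℝ) ≤
        #(goodAssignments O Bad (insert w X)) +
          (∑ τ ∈ E w, τ.cost β) * #(goodAssignments O Bad X) := by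
      calc (#(goodAssignments O Bad X) * #(O w) : ℝ) ≤ #(extensions O Bad X w) :=
            mod_cast card_goodAssignments_mul_le hw
        _ ≤ #(goodAssignments O Bad (insert w X)) +
              ∑ τ ∈ E w, (#{f ∈ extensions O Bad X w | τ.Hits w f} : ℝ) :=
            mod_cast (card_le_card (extensions_subset (hits w))).trans <|
              (card_union_le _ _).trans <| Nat.add_le_add_left card_biUnion_le _
        _ ≤ _ := by
            rw [sum_mul]
            gcongr with τ hτ
            exact card_filter_hits_le_cost_mul hβ mono (bounded w τ hτ) hw hX
    have := mul_le_mul_of_nonneg_left (sum_le w)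
      (Nat.cast_nonneg (α := ℝ) #(goodAssignments O Bad X))
    linarith
  have hnone : 0 < #(goodAssignments O Bad ∅) :=
    card_pos.2 ⟨fun _ => none, mem_goodAssignments.2 ⟨by simp, by simp, not_bad_none⟩⟩
  have hpos : (0 : ℝ) < #(goodAssignments O Bad univ) := by
    refine lt_of_lt_of_le ?_ (pow_card_mul_sdiff_le
      (N := fun X => (#(goodAssignments O Bad X) : ℝ)) hβ.le insert_le (subset_refl univ))
    rw [sdiff_self, bot_eq_empty]
    positivity
  obtain ⟨f, hf⟩ := card_pos.1 (Nat.cast_pos.1 hpos)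
  obtain ⟨hlist, hdom, hbad⟩ := mem_goodAssignments.1 hf
  choose f' hf' using fun i => Option.ne_none_iff_exists'.1 ((hdom i).2 (mem_univ i))
  obtain rfl : f = fun i => some (f' i) := funext hf'
  exact ⟨f', fun i => hlist i _ rfl, hbad⟩

end Counting

section PathEnds

variable {W : Type*} [Fintype W]

/-- Such a graph is a path or a cycle. -/
theorem card_filter_degree_le_one_le_two {G : SimpleGraph W} (hG : G.Connected)
    (hdeg : ∀ v, G.degree v ≤ 2) : #{v | G.degree v ≤ 1} ≤ 2 := by
  have hedges : Fintype.card W ≤ #G.edgeFinset + 1 := by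
    simpa [SimpleGraph.edgeFinset_card] using hG.card_vert_le_card_edgeSet_add_one
  have hsum : ∑ v, (G.degree v + if G.degree v ≤ 1 then 1 else 0) ≤ ∑ _v : W, 2 :=
    sum_le_sum fun v _ => by have := hdeg v; split_ifs <;> omega
  rw [sum_add_distrib, G.sum_degrees_eq_twice_card_edges, ← card_filter, sum_const, card_univ,
    smul_eq_mul] at hsum
  omega

theorem not_reachable_of_degree_le_one {G : SimpleGraph W} (hdeg : ∀ v, G.degree v ≤ 2)
    {x y z : W} (hxy : x ≠ y) (hxz : x ≠ z) (hyz : y ≠ z) (hx : G.degree x ≤ 1)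
    (hy : G.degree y ≤ 1) (hz : G.degree z ≤ 1) (hyx : G.Reachable y x) : ¬ G.Reachable z x := by
  intro hzx
  let C := G.connectedComponentMk x
  have degree_le (v : C) : C.toSimpleGraph.degree v ≤ G.degree v := by
    rw [← SimpleGraph.card_neighborFinset_eq_degree, ← SimpleGraph.card_neighborFinset_eq_degree]
    refine card_le_card_of_injOn Subtype.val (fun u hu => ?_) Subtype.val_injective.injOn
    rw [mem_coe, SimpleGraph.mem_neighborFinset] at hu ⊢
    exact C.toSimpleGraph_hom.map_adj hu
  have hcard := card_filter_degree_le_one_le_two C.connected_toSimpleGraph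
    fun v => (degree_le v).trans (hdeg v)
  have hmem {v : W} (hv : G.Reachable v x) : v ∈ C := SimpleGraph.ConnectedComponent.sound hv
  have hsub : ({⟨x, hmem .rfl⟩, ⟨y, hmem hyx⟩, ⟨z, hmem hzx⟩} : Finset C) ⊆
      ({v | C.toSimpleGraph.degree v ≤ 1} : Finset C) := by
    simp only [insert_subset_iff, singleton_subset_iff, mem_filter_univ]
    exact ⟨(degree_le _).trans hx, (degree_le _).trans hy, (degree_le _).trans hz⟩
  have := card_le_card hsub
  rw [card_eq_three.2 ⟨_, _, _, by simpa using hxy, by simpa using hxz, by simpa using hyz, rfl⟩]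
    at this
  omega

end PathEnds

section Vizing

variable {E W : Type*} {ends : E → Sym2 W} {K : ℕ} {F : Finset E} {c : E → ℕ}

/-- The restriction of `c` to `F` is a proper edge colouring with colours less than `K` of the
multigraph with edge set `F` in which `ends e` is the pair of ends of the edge `e`. -/
structure IsProperOn (ends : E → Sym2 W) (K : ℕ) (F : Finset E) (c : E → ℕ) : Prop where
  lt : ∀ e ∈ F, c e < K
  eq_of_eq : ∀ e ∈ F, ∀ e' ∈ F, ∀ v ∈ ends e, v ∈ ends e' → c e = c e' → e = e'

/-- The colours less than `K` that appear on no edge of `F` at `v`. -/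
noncomputable def missing (ends : E → Sym2 W) (K : ℕ) (F : Finset E) (c : E → ℕ) (v : W) :
    Finset ℕ :=
  range K \ image c {e ∈ F | v ∈ ends e}

theorem mem_missing {v : W} {α : ℕ} :
    α ∈ missing ends K F c v ↔ α < K ∧ ∀ e ∈ F, v ∈ ends e → c e ≠ α := by
  simp [missing]

theorem le_card_missing_add (v : W) :
    K ≤ #(missing ends K F c v) + #{e ∈ F | v ∈ ends e} := by
  have := le_card_sdiff (image c {e ∈ F | v ∈ ends e}) (range K)
  rw [card_range] at this
  have := card_image_le (s := {e ∈ F | v ∈ ends e}) (f := c)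
  rw [missing]
  omega

theorem IsProperOn.update (hc : IsProperOn ends K F c) {e : E} {α : ℕ}
    (hα : ∀ v ∈ ends e, α ∈ missing ends K F c v) :
    IsProperOn ends K (insert e F) (Function.update c e α) := by
  have ne_of_mem {e' : E} (he' : e' ∈ F) {v : W} (hv : v ∈ ends e) (hv' : v ∈ ends e') :
      c e' ≠ α := (mem_missing.1 (hα v hv)).2 e' he' hv'
  constructor
  · intro e' he'
    obtain ⟨v, hv⟩ : ∃ v, v ∈ ends e := ⟨_, (ends e).out_fst_mem⟩
    have := (mem_missing.1 (hα v hv)).1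
    have := hc.lt e'
    grind [Function.update_apply]
  · intro e₁ he₁ e₂ he₂ v hv₁ hv₂ heq
    grind [Function.update_apply, hc.eq_of_eq]

section Fan

/-- Consecutive edges of a Vizing fan at `x`: the colour of `e'` is missing at the end of `e` other
than `x`. -/
def FanStep (ends : E → Sym2 W) (K : ℕ) (F : Finset E) (c : E → ℕ) (x : W) (e e' : E) : Prop :=
  e' ∈ F ∧ x ∈ ends e' ∧ ∃ y, ends e = s(x, y) ∧ c e' ∈ missing ends K F c y

/-- The edge `e` belongs to a Vizing fan at `x` that starts with the edge `e₀`. -/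
def IsFanEdge (ends : E → Sym2 W) (K : ℕ) (F : Finset E) (c : E → ℕ) (x : W) (e₀ : E) : E → Prop :=
  Relation.ReflTransGen (FanStep ends K F c x) e₀

variable {x : W} {e₀ : E}

theorem IsFanEdge.eq_or_mem {e : E} (he : IsFanEdge ends K F c x e₀ e) :
    e = e₀ ∨ e ∈ F ∧ x ∈ ends e := by
  cases he with
  | refl => exact Or.inl rfl
  | tail _ h => exact Or.inr ⟨h.1, h.2.1⟩

theorem exists_avoiding_of_reflTransGen {r : E → E → Prop} {a b d : E}
    (h : Relation.ReflTransGen r a b) :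
    Relation.ReflTransGen (fun u v => v ≠ d ∧ r u v) a b ∨
      ∃ u, Relation.ReflTransGen (fun u v => v ≠ d ∧ r u v) a u ∧ r u d := by
  induction h with
  | refl => exact Or.inl .refl
  | @tail u v _ huv ih =>
    obtain ih | ih := ih
    · obtain rfl | hv := eq_or_ne v d
      · exact Or.inr ⟨u, ih, huv⟩
      · exact Or.inl (ih.tail ⟨hv, huv⟩)
    · exact Or.inr ih

theorem FanStep.update {d u v : E} {α : ℕ} (hα : α ∈ missing ends K F c x)
    (h : FanStep ends K F c x u v) (hv : v ≠ d) :
    FanStep ends K F (Function.update c d α) x u v := by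
  obtain ⟨hvF, hxv, y, hy, hmiss⟩ := h
  have hvα : c v ≠ α := (mem_missing.1 hα).2 v hvF hxv
  refine ⟨hvF, hxv, y, hy, ?_⟩
  rw [Function.update_of_ne hv]
  rw [mem_missing] at hmiss ⊢
  grind [Function.update_apply]

/-- Recolouring the last edge `e` of the fan with `α` frees the former colour of `e` both at `x` and
at the other end of the preceding edge, while the fan up to its first entry into `e` survives. -/
theorem exists_isProperOn_insert_of_steps_into (A : Finset E) (hc : IsProperOn ends K F c) {e : E}
    (he : Relation.ReflTransGen (fun u v => v ∈ A ∧ FanStep ends K F c x u v) e₀ e) {y : W}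
    (hy : ends e = s(x, y)) {α : ℕ} (hαx : α ∈ missing ends K F c x)
    (hαy : α ∈ missing ends K F c y) : ∃ c', IsProperOn ends K (insert e₀ F) c' := by
  induction A using Finset.strongInduction generalizing c e y α with
  | H A ih =>
    have hc' := hc.update (e := e) (α := α) (by simp [hy, hαx, hαy])
    obtain rfl | hne := eq_or_ne e e₀
    · exact ⟨_, hc'⟩
    obtain ⟨d, hd, heA, heF, hxe, z, hz, hez⟩ : ∃ d, Relation.ReflTransGen
        (fun u v => v ≠ e ∧ v ∈ A ∧ FanStep ends K F c x u v) e₀ d ∧ e ∈ A ∧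
          FanStep ends K F c x d e := by
      obtain h | h := exists_avoiding_of_reflTransGen (d := e) he
      · cases h with
        | refl => exact absurd rfl hne
        | tail _ h => exact absurd rfl h.1
      · exact h
    rw [insert_eq_of_mem heF] at hc'
    refine ih (A.erase e) (erase_ssubset heA) hc' (Relation.ReflTransGen.mono (fun u v h =>
      ⟨mem_erase.2 ⟨h.1, h.2.1⟩, h.2.2.update hαx h.1⟩) _ _ hd) hz (α := c e) ?_ ?_
    · have := (mem_missing.1 hαx).2 e heF hxe
      refine mem_missing.2 ⟨hc.lt e heF, fun e' he' hxe' => ?_⟩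
      grind [Function.update_apply, hc.eq_of_eq]
    · have := (mem_missing.1 hαx).2 e heF hxe
      rw [mem_missing] at hez ⊢
      grind [Function.update_apply]

theorem IsFanEdge.disjoint_missing (hc : IsProperOn ends K F c)
    (hext : ¬ ∃ c', IsProperOn ends K (insert e₀ F) c') {e : E}
    (he : IsFanEdge ends K F c x e₀ e) {y : W} (hy : ends e = s(x, y)) :
    Disjoint (missing ends K F c x) (missing ends K F c y) :=
  disjoint_left.2 fun _ hx hy' => hext <|
    exists_isProperOn_insert_of_steps_into F hc
      (Relation.ReflTransGen.mono (fun _ _ h => ⟨h.1, h⟩) _ _ he) hy hx hy'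

end Fan

section Kempe

/-- Every edge of `F` coloured `α` or `β` has either both ends or no end in `S`. -/
def IsKempeClosed (ends : E → Sym2 W) (F : Finset E) (c : E → ℕ) (α β : ℕ) (S : Set W) : Prop :=
  ∀ e ∈ F, c e = α ∨ c e = β → ∀ u ∈ ends e, ∀ v ∈ ends e, u ∈ S → v ∈ S

/-- The colouring `c` with the colours `α` and `β` exchanged on the edges with an end in `S`. -/
noncomputable def swapOn (ends : E → Sym2 W) (α β : ℕ) (S : Set W) (c : E → ℕ) (e : E) : ℕ :=
  if ∃ v ∈ ends e, v ∈ S then Equiv.swap α β (c e) else c e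

variable {α β : ℕ} {S : Set W}

theorem swapOn_of_mem {e : E} {v : W} (hv : v ∈ ends e) (hvS : v ∈ S) :
    swapOn ends α β S c e = Equiv.swap α β (c e) :=
  if_pos ⟨v, hv, hvS⟩

theorem IsKempeClosed.swapOn_of_notMem (hS : IsKempeClosed ends F c α β S) {e : E} (he : e ∈ F)
    {v : W} (hv : v ∈ ends e) (hvS : v ∉ S) : swapOn ends α β S c e = c e := by
  rw [swapOn, ite_eq_right_iff]
  rintro ⟨u, hu, huS⟩
  have : ¬ (c e = α ∨ c e = β) := fun h => hvS (hS e he h u hu v hv huS)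
  exact Equiv.swap_apply_of_ne_of_ne (fun h => this (.inl h)) fun h => this (.inr h)

theorem swap_lt (hα : α < K) (hβ : β < K) {γ : ℕ} (hγ : γ < K) : Equiv.swap α β γ < K := by
  rw [Equiv.swap_apply_def]
  split_ifs <;> assumption

theorem IsProperOn.swapOn (hc : IsProperOn ends K F c) (hα : α < K) (hβ : β < K)
    (hS : IsKempeClosed ends F c α β S) : IsProperOn ends K F (swapOn ends α β S c) := by
  constructor
  · intro e he
    rw [AVD.swapOn]
    split_ifs
    exacts [swap_lt hα hβ (hc.lt e he), hc.lt e he]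
  · intro e he e' he' v hv hv' heq
    by_cases hvS : v ∈ S
    · rw [swapOn_of_mem hv hvS, swapOn_of_mem hv' hvS, EmbeddingLike.apply_eq_iff_eq] at heq
      exact hc.eq_of_eq e he e' he' v hv hv' heq
    · rw [hS.swapOn_of_notMem he hv hvS, hS.swapOn_of_notMem he' hv' hvS] at heq
      exact hc.eq_of_eq e he e' he' v hv hv' heq

theorem mem_missing_swapOn_of_mem (hα : α < K) (hβ : β < K) {v : W} (hv : v ∈ S) {γ : ℕ}
    (hγ : γ ∈ missing ends K F c v) :
    Equiv.swap α β γ ∈ missing ends K F (swapOn ends α β S c) v := by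
  rw [mem_missing] at hγ ⊢
  refine ⟨swap_lt hα hβ hγ.1, fun e he hve => ?_⟩
  rw [swapOn_of_mem hve hv]
  exact (Equiv.swap α β).injective.ne (hγ.2 e he hve)

theorem IsKempeClosed.mem_missing_swapOn (hS : IsKempeClosed ends F c α β S) {v : W} (hv : v ∉ S)
    {γ : ℕ} (hγ : γ ∈ missing ends K F c v) :
    γ ∈ missing ends K F (swapOn ends α β S c) v := by
  rw [mem_missing] at hγ ⊢
  refine ⟨hγ.1, fun e he hve => ?_⟩
  rw [hS.swapOn_of_notMem he hve hv]
  exact hγ.2 e he hve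

/-- The graph formed by the edges of `F` coloured `α` or `β`. -/
def kempeGraph (ends : E → Sym2 W) (F : Finset E) (c : E → ℕ) (α β : ℕ) : SimpleGraph W :=
  .fromEdgeSet (ends '' {e | e ∈ F ∧ (c e = α ∨ c e = β)})

theorem kempeGraph_adj {u v : W} :
    (kempeGraph ends F c α β).Adj u v ↔
      (∃ e ∈ F, (c e = α ∨ c e = β) ∧ ends e = s(u, v)) ∧ u ≠ v := by
  simp [kempeGraph, and_assoc]

theorem isKempeClosed_setOf_reachable (z : W) :
    IsKempeClosed ends F c α β {v | (kempeGraph ends F c α β).Reachable v z} := by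
  intro e he hαβ u hu v hv huz
  obtain rfl | huv := eq_or_ne u v
  · exact huz
  · have : ends e = s(v, u) := (Sym2.mem_and_mem_iff huv.symm).1 ⟨hv, hu⟩
    exact (kempeGraph_adj.2 ⟨⟨e, he, hαβ, this⟩, huv.symm⟩).reachable.trans huz

theorem IsProperOn.degree_kempeGraph_le [Fintype W] (hc : IsProperOn ends K F c) (v : W) :
    (kempeGraph ends F c α β).degree v ≤ #(({α, β} : Finset ℕ) \ missing ends K F c v) := by
  rw [← SimpleGraph.card_neighborFinset_eq_degree]
  refine card_le_card_of_forall_subsingleton (fun u γ => ∃ e ∈ F, ends e = s(v, u) ∧ c e = γ) ?_ ?_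
  · intro u hu
    obtain ⟨⟨e, he, hαβ, hends⟩, -⟩ :=
      kempeGraph_adj.1 ((SimpleGraph.mem_neighborFinset _ _ _).1 hu)
    refine ⟨c e, mem_sdiff.2 ⟨by simpa using hαβ, fun h => ?_⟩, e, he, hends, rfl⟩
    exact (mem_missing.1 h).2 e he (by simp [hends]) rfl
  · rintro _ - u ⟨-, e, he, hends, rfl⟩ u' ⟨-, e', he', hends', heq⟩
    obtain rfl := hc.eq_of_eq e' he' e he v (by simp [hends']) (by simp [hends]) heq
    exact Sym2.congr_right.1 (hends.symm.trans hends')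

theorem IsProperOn.exists_isKempeClosed [Finite W] (hc : IsProperOn ends K F c) {x y z : W}
    (hxy : x ≠ y) (hxz : x ≠ z) (hyz : y ≠ z) (hx : β ∈ missing ends K F c x)
    (hy : α ∈ missing ends K F c y) (hz : α ∈ missing ends K F c z) :
    ∃ S, IsKempeClosed ends F c α β S ∧ x ∉ S ∧ (y ∈ S ∨ z ∈ S) := by
  cases nonempty_fintype W
  have degree_le_two v : (kempeGraph ends F c α β).degree v ≤ 2 :=
    (hc.degree_kempeGraph_le v).trans <| (card_le_card sdiff_subset).trans card_le_two
  have degree_le_one {v γ} (hγ : γ ∈ missing ends K F c v) (hγ' : γ = α ∨ γ = β) :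
      (kempeGraph ends F c α β).degree v ≤ 1 := by
    refine (hc.degree_kempeGraph_le v).trans (card_le_one.2 ?_)
    grind
  by_cases hyx : (kempeGraph ends F c α β).Reachable y x
  · have hzx := not_reachable_of_degree_le_one degree_le_two hxy hxz hyz
      (degree_le_one hx (.inr rfl)) (degree_le_one hy (.inl rfl)) (degree_le_one hz (.inl rfl)) hyx
    exact ⟨_, isKempeClosed_setOf_reachable z, fun h => hzx h.symm, .inr .rfl⟩
  · exact ⟨_, isKempeClosed_setOf_reachable y, fun h => hyx h.symm, .inl .rfl⟩

end Kempe

section Step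

variable {x : W} {e₀ : E}

/-- After a swap on `S`, follow the fan up to its first edge whose other end lies in `S` and misses
`α`: all earlier steps survive the swap. -/
theorem IsFanEdge.swapOn {α β : ℕ} {S : Set W} (hα : α < K) (hβ : β ∈ missing ends K F c x)
    (hS : IsKempeClosed ends F c α β S) (hxS : x ∉ S) {e : E} (he : IsFanEdge ends K F c x e₀ e) :
    IsFanEdge ends K F (swapOn ends α β S c) x e₀ e ∨
      ∃ d, IsFanEdge ends K F (swapOn ends α β S c) x e₀ d ∧
        ∃ z ∈ S, ends d = s(x, z) ∧ α ∈ missing ends K F c z := by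
  induction he with
  | refl => exact .inl .refl
  | @tail u v _ huv ih =>
    obtain ⟨hvF, hxv, t, hut, ht⟩ := huv
    refine ih.elim (fun ih => ?_) .inr
    by_cases hfirst : t ∈ S ∧ c v = α
    · exact .inr ⟨u, ih, t, hfirst.1, hut, hfirst.2 ▸ ht⟩
    refine .inl (ih.tail ⟨hvF, hxv, t, hut, ?_⟩)
    rw [hS.swapOn_of_notMem hvF hxv hxS]
    by_cases htS : t ∈ S
    · have hvα : c v ≠ α := fun h => hfirst ⟨htS, h⟩
      have hvβ : c v ≠ β := (mem_missing.1 hβ).2 v hvF hxv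
      simpa only [Equiv.swap_apply_of_ne_of_ne hvα hvβ] using
        mem_missing_swapOn_of_mem hα (mem_missing.1 hβ).1 htS ht
    · exact hS.mem_missing_swapOn htS ht

theorem IsFanEdge.notMem_of_isKempeClosed (hc : IsProperOn ends K F c)
    (hext : ¬ ∃ c', IsProperOn ends K (insert e₀ F) c') {α β : ℕ} {S : Set W}
    (hβ : β ∈ missing ends K F c x) (hS : IsKempeClosed ends F c α β S) (hxS : x ∉ S) {e : E}
    (he : IsFanEdge ends K F c x e₀ e) {y : W} (hy : ends e = s(x, y))
    (hα : α ∈ missing ends K F c y) : y ∉ S := by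
  intro hyS
  obtain ⟨d, hd, z, hzS, hz, hαz⟩ : ∃ d, IsFanEdge ends K F (AVD.swapOn ends α β S c) x e₀ d ∧
      ∃ z ∈ S, ends d = s(x, z) ∧ α ∈ missing ends K F c z := by
    obtain h | h := he.swapOn (mem_missing.1 hα).1 hβ hS hxS
    · exact ⟨e, h, y, hyS, hy, hα⟩
    · exact h
  have hα := (mem_missing.1 hα).1
  have hβz := mem_missing_swapOn_of_mem hα (mem_missing.1 hβ).1 hzS hαz
  rw [Equiv.swap_apply_left] at hβz
  exact disjoint_left.1 (hd.disjoint_missing (hc.swapOn hα (mem_missing.1 hβ).1 hS) hext hz)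
    (hS.mem_missing_swapOn hxS hβ) hβz

theorem IsFanEdge.disjoint_missing_of_ne [Finite W] (hc : IsProperOn ends K F c)
    (hext : ¬ ∃ c', IsProperOn ends K (insert e₀ F) c') (hx : (missing ends K F c x).Nonempty)
    {e e' : E} (he : IsFanEdge ends K F c x e₀ e) (he' : IsFanEdge ends K F c x e₀ e') {y y' : W}
    (hy : ends e = s(x, y)) (hy' : ends e' = s(x, y')) (hxy : x ≠ y) (hxy' : x ≠ y')
    (hne : y ≠ y') : Disjoint (missing ends K F c y) (missing ends K F c y') := by
  refine disjoint_left.2 fun α hα hα' => ?_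
  obtain ⟨β, hβ⟩ := hx
  obtain ⟨S, hS, hxS, hyS | hyS⟩ := hc.exists_isKempeClosed hxy hxy' hne hβ hα hα'
  · exact he.notMem_of_isKempeClosed hc hext hβ hS hxS hy hα hyS
  · exact he'.notMem_of_isKempeClosed hc hext hβ hS hxS hy' hα' hyS

/-- The ends other than `x` of the edges in fans at `x` that start with `e₀`. -/
noncomputable def fanEnds [Fintype W] (ends : E → Sym2 W) (K : ℕ) (F : Finset E) (c : E → ℕ)
    (x : W) (e₀ : E) : Finset W :=
  {y | ∃ e, IsFanEdge ends K F c x e₀ e ∧ ends e = s(x, y)}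

theorem mem_fanEnds [Fintype W] {y : W} :
    y ∈ fanEnds ends K F c x e₀ ↔ ∃ e, IsFanEdge ends K F c x e₀ e ∧ ends e = s(x, y) := by
  simp [fanEnds]

theorem biUnion_missing_subset [Fintype W] (hc : IsProperOn ends K F c) (he₀ : e₀ ∉ F)
    (hext : ¬ ∃ c', IsProperOn ends K (insert e₀ F) c') :
    (fanEnds ends K F c x e₀).biUnion (missing ends K F c) ⊆
      image c ({e ∈ insert e₀ F | IsFanEdge ends K F c x e₀ e}.erase e₀) := by
  intro γ hγ
  obtain ⟨y, hy, hγy⟩ := mem_biUnion.1 hγ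
  obtain ⟨e, he, hey⟩ := mem_fanEnds.1 hy
  obtain ⟨d, hdF, hxd, rfl⟩ : ∃ d ∈ F, x ∈ ends d ∧ c d = γ := by
    have hγx := disjoint_right.1 (he.disjoint_missing hc hext hey) hγy
    rw [mem_missing] at hγx hγy
    simpa [hγy.1] using hγx
  have hd : IsFanEdge ends K F c x e₀ d := he.tail ⟨hdF, hxd, y, hey, hγy⟩
  refine mem_image_of_mem c ?_
  grind

theorem fanEdges_subset_biUnion [Fintype W] (hx : x ∈ ends e₀) :
    {e ∈ insert e₀ F | IsFanEdge ends K F c x e₀ e} ⊆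
      (fanEnds ends K F c x e₀).biUnion fun y => {e ∈ insert e₀ F | ends e = s(x, y)} := by
  intro e he
  obtain ⟨heF, he⟩ := mem_filter.1 he
  have hxe : x ∈ ends e := he.eq_or_mem.elim (fun h => h ▸ hx) And.right
  obtain ⟨y, hy⟩ := Sym2.mem_iff_exists.1 hxe
  exact mem_biUnion.2 ⟨y, mem_fanEnds.2 ⟨e, he, hy⟩, mem_filter.2 ⟨heF, hy⟩⟩

theorem IsProperOn.exists_insert [Finite W] (hc : IsProperOn ends K F c) (he₀ : e₀ ∉ F)
    (hx : x ∈ ends e₀) (hdiag : ∀ e ∈ insert e₀ F, ¬ (ends e).IsDiag)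
    (hdeg : #{e ∈ insert e₀ F | x ∈ ends e} ≤ K)
    (hmult : ∀ y ≠ x, #{e ∈ insert e₀ F | y ∈ ends e} + #{e ∈ insert e₀ F | ends e = s(x, y)} ≤ K) :
    ∃ c', IsProperOn ends K (insert e₀ F) c' := by
  by_contra hext
  cases nonempty_fintype W
  have card_at_le (v : W) : #{e ∈ F | v ∈ ends e} ≤ #{e ∈ insert e₀ F | v ∈ ends e} :=
    card_le_card (filter_subset_filter _ (subset_insert _ _))
  have hx_missing : (missing ends K F c x).Nonempty := by
    have := le_card_missing_add (ends := ends) (K := K) (F := F) (c := c) x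
    rw [filter_insert, if_pos hx, card_insert_of_notMem (by simp [he₀])] at hdeg
    exact card_pos.1 (by omega)
  have ne_of_mem {y} (hy : y ∈ fanEnds ends K F c x e₀) : y ≠ x := by
    rintro rfl
    obtain ⟨e, he, hey⟩ := mem_fanEnds.1 hy
    have heF : e ∈ insert e₀ F := by grind [he.eq_or_mem]
    exact hdiag e heF (by simp [hey])
  have hdisj : (fanEnds ends K F c x e₀ : Set W).PairwiseDisjoint (missing ends K F c) := by
    intro y hy y' hy' hne
    obtain ⟨e, he, hey⟩ := mem_fanEnds.1 hy
    obtain ⟨e', he', hey'⟩ := mem_fanEnds.1 hy'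
    exact he.disjoint_missing_of_ne hc hext hx_missing he' hey hey' (ne_of_mem hy).symm
      (ne_of_mem hy').symm hne
  have hmem : e₀ ∈ {e ∈ insert e₀ F | IsFanEdge ends K F c x e₀ e} :=
    mem_filter.2 ⟨mem_insert_self _ _, .refl⟩
  have : #{e ∈ insert e₀ F | IsFanEdge ends K F c x e₀ e} ≤
      #({e ∈ insert e₀ F | IsFanEdge ends K F c x e₀ e}.erase e₀) :=
    calc #{e ∈ insert e₀ F | IsFanEdge ends K F c x e₀ e}
      ≤ ∑ y ∈ fanEnds ends K F c x e₀, #{e ∈ insert e₀ F | ends e = s(x, y)} :=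
        (card_le_card (fanEdges_subset_biUnion hx)).trans card_biUnion_le
    _ ≤ ∑ y ∈ fanEnds ends K F c x e₀, #(missing ends K F c y) := by
        refine sum_le_sum fun y hy => ?_
        have := hmult y (ne_of_mem hy)
        have := card_at_le y
        have := le_card_missing_add (ends := ends) (K := K) (F := F) (c := c) y
        omega
    _ = #((fanEnds ends K F c x e₀).biUnion (missing ends K F c)) := (card_biUnion hdisj).symm
    _ ≤ _ := (card_le_card (biUnion_missing_subset hc he₀ hext)).trans card_image_le
  exact absurd this (card_erase_lt_of_mem hmem).not_ge

end Step

/-- **Vizing's theorem** for multigraphs, with the degree and multiplicity condition imposed around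
a single end of each edge. -/
theorem exists_isProperOn [Finite W] (hdiag : ∀ e ∈ F, ¬ (ends e).IsDiag)
    (hdeg : ∀ x, #{e ∈ F | x ∈ ends e} ≤ K)
    (hmult : ∀ e ∈ F, ∃ x ∈ ends e, ∀ y ≠ x,
      #{e ∈ F | y ∈ ends e} + #{e ∈ F | ends e = s(x, y)} ≤ K) :
    ∃ c, IsProperOn ends K F c := by
  suffices ∀ F' ⊆ F, ∃ c, IsProperOn ends K F' c from this F subset_rfl
  intro F' hF'
  induction F' using Finset.induction_on with
  | empty => exact ⟨fun _ => 0, by simp, by simp⟩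
  | insert e F' he ih =>
    obtain ⟨c, hc⟩ := ih ((subset_insert _ _).trans hF')
    obtain ⟨x, hx, hmult⟩ := hmult e (hF' (mem_insert_self _ _))
    refine hc.exists_insert he hx (fun e he => hdiag e (hF' he)) ((card_le_card ?_).trans (hdeg x))
      fun y hy => (Nat.add_le_add (card_le_card ?_) (card_le_card ?_)).trans (hmult y hy)
    all_goals exact filter_subset_filter _ hF'

end Vizing

section Selection

variable {V W : Type*} [Fintype V] {G : SimpleGraph V} {S : Set V} {π : V → W} {c : Sym2 V → ℕ}
  {f g : S × Bool → Option (Sym2 V)} {O : S → Finset (Sym2 V)} {q : ℕ}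

/-- The edges at `x` chosen by the partial selection `f`, in which every vertex of `S` has two
slots. The choosing vertex need not be `x`. -/
noncomputable def chosenAt (f : S × Bool → Option (Sym2 V)) (x : V) : Finset (Sym2 V) :=
  {e | x ∈ e ∧ ∃ i, f i = some e}

/-- The slots outside the class `y` of `π` whose chosen edge leads to that class. -/
noncomputable def incoming (π : V → W) (f : S × Bool → Option (Sym2 V)) (y : W) :
    Finset (S × Bool) :=
  {i | π i.1 ≠ y ∧ ∃ e ∈ f i, y ∈ e.map π}

/-- The vertices `u` and `v` may see the same colours once chosen edges are recoloured with new
colours. The edges `J` and `K` losing their colours are allowed to be any chosen edges, except that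
`J` contains both edges chosen by `u`; this makes the notion monotone in `f`. -/
def HasConflict (G : SimpleGraph V) (c : Sym2 V → ℕ) (f : S × Bool → Option (Sym2 V))
    (u v : S) : Prop :=
  ∃ J ⊆ chosenAt f u, ∃ K ⊆ chosenAt f v, (∀ b, ∃ e ∈ J, f (u, b) = some e) ∧
    (G.incidenceFinset u \ J).image c = (G.incidenceFinset v \ K).image c

/-- A partial selection is unusable if a class receives more than `q` edges or if adjacent vertices
are in conflict. -/
def IsUnusable (G : SimpleGraph V) (π : V → W) (c : Sym2 V → ℕ) (q : ℕ)
    (f : S × Bool → Option (Sym2 V)) : Prop :=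
  (∃ y, q < #(incoming π f y)) ∨ ∃ u v : S, G.Adj u v ∧ HasConflict G c f u v

theorem mem_chosenAt {x : V} {e : Sym2 V} : e ∈ chosenAt f x ↔ x ∈ e ∧ ∃ i, f i = some e := by
  simp [chosenAt]

theorem mem_incoming {y : W} {i : S × Bool} :
    i ∈ incoming π f y ↔ π i.1 ≠ y ∧ ∃ e ∈ f i, y ∈ e.map π := by
  simp [incoming]

theorem chosenAt_mono (h : ∀ i, ∀ e ∈ f i, e ∈ g i) (x : V) : chosenAt f x ⊆ chosenAt g x := by
  intro e
  simp only [mem_chosenAt]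
  exact And.imp_right (Exists.imp fun i => h i e)

theorem incoming_mono (h : ∀ i, ∀ e ∈ f i, e ∈ g i) (y : W) : incoming π f y ⊆ incoming π g y := by
  intro i
  simp only [mem_incoming]
  exact And.imp_right (Exists.imp fun e => And.imp_left (h i e))

theorem HasConflict.mono {u v : S} (hf : HasConflict G c f u v)
    (hslots : ∀ b, ∀ e ∈ f (u, b), e ∈ g (u, b)) (hu : chosenAt f u ⊆ chosenAt g u)
    (hv : chosenAt f v ⊆ chosenAt g v) : HasConflict G c g u v := by
  obtain ⟨J, hJ, K, hK, hown, heq⟩ := hf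
  exact ⟨J, hJ.trans hu, K, hK.trans hv,
    fun b => (hown b).imp fun e => And.imp_right (hslots b e), heq⟩

theorem IsUnusable.mono (h : ∀ i, ∀ e ∈ f i, e ∈ g i) (hf : IsUnusable G π c q f) :
    IsUnusable G π c q g := by
  obtain ⟨y, hy⟩ | ⟨u, v, huv, hconf⟩ := hf
  · exact .inl ⟨y, hy.trans_le (card_le_card (incoming_mono h y))⟩
  · exact .inr ⟨u, v, huv, hconf.mono (fun b => h _) (chosenAt_mono h u) (chosenAt_mono h v)⟩

theorem not_isUnusable_none : ¬ IsUnusable (S := S) G π c q fun _ => none := by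
  rintro (⟨y, hy⟩ | ⟨u, v, -, J, -, K, -, hown, -⟩)
  · simp [incoming] at hy
  · simpa using hown false

theorem card_chosenAt_le (hπ : S.InjOn π) (u : S) :
    #(chosenAt f u) ≤ #(incoming π f (π u)) + 2 := by
  have hsub : (chosenAt f u).map .some ⊆
      (incoming π f (π u) ∪ {(u, false), (u, true)}).image f := by
    intro o ho
    obtain ⟨e, he, rfl⟩ := mem_map.1 ho
    obtain ⟨hue, i, hi⟩ := mem_chosenAt.1 he
    refine mem_image.2 ⟨i, ?_, hi⟩
    obtain ⟨x, b⟩ := i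
    by_cases hxu : x = u
    · cases b <;> simp [hxu]
    · have hπxu : π x ≠ π u := fun h => hxu (Subtype.ext (hπ x.2 u.2 h))
      exact mem_union_left _ (mem_incoming.2 ⟨hπxu, e, hi, Sym2.mem_map.2 ⟨u, hue, rfl⟩⟩)
  calc #(chosenAt f u) = #((chosenAt f u).map .some) := (card_map _).symm
    _ ≤ #(incoming π f (π u) ∪ {(u, false), (u, true)}) := (card_le_card hsub).trans card_image_le
    _ ≤ #(incoming π f (π u)) + 2 := (card_union_le _ _).trans (Nat.add_le_add_left card_le_two _)

theorem chosenAt_subset_insert {w : S × Bool} {e : Sym2 V} (he : f w = some e)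
    (hfg : ∀ i ≠ w, f i = g i) (x : V) : chosenAt f x ⊆ insert e (chosenAt g x) := by
  intro e' he'
  obtain ⟨hx, i, hi⟩ := mem_chosenAt.1 he'
  obtain rfl | hiw := eq_or_ne i w
  · grind
  · exact mem_insert_of_mem (mem_chosenAt.2 ⟨hx, i, by rw [← hfg i hiw, hi]⟩)

theorem incoming_erase_subset {w : S × Bool} (hfg : ∀ i ≠ w, f i = g i) (y : W) :
    (incoming π f y).erase w ⊆ incoming π g y := by
  intro i hi
  obtain ⟨hiw, hi⟩ := mem_erase.1 hi
  rwa [mem_incoming, ← hfg i hiw, ← mem_incoming]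

theorem card_chosenAt_le_of_isExtensionAt (hπ : S.InjOn π) {w : S × Bool}
    (hf : IsExtensionAt (fun i => O i.1) (IsUnusable G π c q) w f) (x : S) :
    #(chosenAt f x) ≤ q + 3 := by
  obtain ⟨e, he⟩ := Option.ne_none_iff_exists'.1 hf.ne_none
  obtain ⟨g, hfg, hbad⟩ := hf.exists_not_bad
  have hin : #(incoming π g (π x)) ≤ q := not_lt.1 fun h => hbad (.inl ⟨_, h⟩)
  calc #(chosenAt f x) ≤ #(chosenAt g x) + 1 :=
        (card_le_card (chosenAt_subset_insert he hfg x)).trans (card_insert_le _ _)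
    _ ≤ #(incoming π g (π x)) + 2 + 1 := Nat.add_le_add_right (card_chosenAt_le hπ x) 1
    _ ≤ q + 3 := by omega

end Selection

section ConflictCount

theorem card_le_two_pow_mul {α β : Type*} {A : Finset α} {X : Finset β} {N : ℕ}
    (R : Finset β → Finset α) (hR : ∀ a ∈ A, ∃ K ⊆ X, a ∈ R K ∧ #(R K) ≤ N) :
    #A ≤ 2 ^ #X * N := by
  have hsub : A ⊆ {K ∈ X.powerset | #(R K) ≤ N}.biUnion R := by
    intro a ha
    obtain ⟨K, hK, haK, hcard⟩ := hR a ha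
    exact mem_biUnion.2 ⟨K, mem_filter.2 ⟨mem_powerset.2 hK, hcard⟩, haK⟩
  calc #A ≤ #{K ∈ X.powerset | #(R K) ≤ N} * N :=
        (card_le_card hsub).trans (card_biUnion_le_card_mul _ _ _ fun K hK => (mem_filter.1 hK).2)
    _ ≤ 2 ^ #X * N := by
        rw [← card_powerset]
        exact Nat.mul_le_mul_right _ (card_filter_le _ _)

theorem card_le_card_sq_of_slots {U C : Type*} {A : Finset (U × Bool → Option C)} {u : U}
    {g : U × Bool → Option C} {Q : Finset C} (hg : ∀ f ∈ A, ∀ i, i.1 ≠ u → f i = g i)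
    (hQ : ∀ f ∈ A, ∀ b, ∃ e ∈ Q, f (u, b) = some e) : #A ≤ #Q ^ 2 := by
  have hcard : #(Fintype.piFinset fun _ : Bool => Q.map .some) = #Q ^ 2 := by simp
  rw [← hcard]
  refine card_le_card_of_injOn (fun f b => f (u, b)) (fun f hf => ?_) fun f hf f' hf' h => ?_
  · refine Fintype.mem_piFinset.2 fun b => ?_
    obtain ⟨e, he, hfe⟩ := hQ f hf b
    exact mem_map.2 ⟨e, he, hfe.symm⟩
  · ext1 ⟨x, b⟩
    obtain rfl | hx := eq_or_ne x u
    · exact congrFun h b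
    · rw [hg f hf _ hx, hg f' hf' _ hx]

variable {V : Type*} {c : Sym2 V → ℕ}

theorem filter_notMem_image_sdiff_eq {A B J K : Finset (Sym2 V)} (hc : Set.InjOn c A) (hJ : J ⊆ A)
    (h : (A \ J).image c = (B \ K).image c) : {e ∈ A | c e ∉ (B \ K).image c} = J := by
  rw [← h]
  ext e
  simp only [mem_filter, mem_image, mem_sdiff]
  exact ⟨fun ⟨he, hne⟩ => by_contra fun heJ => hne ⟨e, ⟨he, heJ⟩, rfl⟩,
    fun he => ⟨hJ he, fun ⟨e', ⟨he', heJ'⟩, hee'⟩ => heJ' (hc he' (hJ he) hee' ▸ he)⟩⟩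

variable [Fintype V] {G : SimpleGraph V} {S : Set V}

/-- The edges `K` in a conflict lie in a set known from `g` up to the edge `uv`, and `K` determines
the set `J`, which contains the two unknown choices of `u`. -/
theorem card_le_of_hasConflict {A : Finset (S × Bool → Option (Sym2 V))} {u v : S} {r : ℕ}
    (huv : u ≠ v) (g : S × Bool → Option (Sym2 V)) (hc : Set.InjOn c (G.incidenceFinset u))
    (hlist : ∀ f ∈ A, ∀ i, ∀ e ∈ f i, e ∈ G.incidenceFinset i.1)
    (hcard : ∀ f ∈ A, ∀ x : S, #(chosenAt f x) ≤ r) (hconf : ∀ f ∈ A, HasConflict G c f u v)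
    (hg : ∀ f ∈ A, ∀ i, i.1 ≠ u → f i = g i) : #A ≤ 2 ^ (r + 1) * r ^ 2 := by
  obtain rfl | ⟨f₀, hf₀⟩ := A.eq_empty_or_nonempty
  · simp
  let known := chosenAt (fun i => if i.1 = u then none else g i) v
  have known_le : #known ≤ r := by
    refine (card_le_card (chosenAt_mono (g := f₀) (fun i e he => ?_) v)).trans (hcard f₀ hf₀ v)
    grind
  have sub_insert : ∀ f ∈ A, chosenAt f v ⊆ insert s(u.1, v.1) known := by
    intro f hf e he
    obtain ⟨hve, i, hi⟩ := mem_chosenAt.1 he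
    by_cases hiu : i.1 = u
    · have hue : u.1 ∈ e := hiu ▸ ((G.mem_incidenceFinset _ _).1 (hlist f hf i e hi)).2
      exact mem_insert.2 (.inl ((Sym2.mem_and_mem_iff (Subtype.coe_ne_coe.2 huv)).1 ⟨hue, hve⟩))
    · refine mem_insert_of_mem (mem_chosenAt.2 ⟨hve, i, ?_⟩)
      rw [if_neg hiu, ← hg f hf i hiu, hi]
  have chosenAt_sub : ∀ f ∈ A, chosenAt f u ⊆ G.incidenceFinset u := by
    intro f hf e he
    obtain ⟨hue, i, hi⟩ := mem_chosenAt.1 he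
    exact (G.mem_incidenceFinset _ _).2 ⟨((G.mem_incidenceFinset _ _).1 (hlist f hf i e hi)).1, hue⟩
  let Q K := {e ∈ G.incidenceFinset u.1 | c e ∉ (G.incidenceFinset v \ K).image c}
  let R K := {f ∈ A | ∀ b, ∃ e ∈ Q K, f (u, b) = some e}
  have hR : ∀ f ∈ A, ∃ K ⊆ insert s(u.1, v.1) known, f ∈ R K ∧ #(R K) ≤ r ^ 2 := by
    intro f hf
    obtain ⟨J, hJ, K, hK, hown, heq⟩ := hconf f hf
    have hQ : Q K = J := filter_notMem_image_sdiff_eq hc (hJ.trans (chosenAt_sub f hf)) heq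
    refine ⟨K, hK.trans (sub_insert f hf), mem_filter.2 ⟨hf, by rwa [hQ]⟩, ?_⟩
    calc #(R K) ≤ #(Q K) ^ 2 := card_le_card_sq_of_slots
          (fun f hf => hg f (mem_filter.1 hf).1) fun f hf => (mem_filter.1 hf).2
      _ ≤ r ^ 2 := Nat.pow_le_pow_left (hQ ▸ (card_le_card hJ).trans (hcard f hf u)) 2
  calc #A ≤ 2 ^ #(insert s(u.1, v.1) known) * r ^ 2 := card_le_two_pow_mul R hR
    _ ≤ 2 ^ (r + 1) * r ^ 2 := by
      gcongr
      · norm_num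
      · exact (card_insert_le _ _).trans (Nat.add_le_add_right known_le 1)

end ConflictCount

section Obstructions

/-- Choosing `p.1` at `w` overloads something already receiving the choices `p.2`. These are
determined by the obstruction, so that they can be released. -/
noncomputable def overload {I C : Type*} (w : I) (p : Σ _ : C, Finset (I × C)) :
    Obstruction I C where
  released := p.2.image Prod.fst
  bound := 1
  occurs f := f w = some p.1 ∧ ∀ a ∈ p.2, f a.1 = some a.2

theorem overload_isBounded {I C : Type*} {O : I → Finset C} {w : I}
    (p : Σ _ : C, Finset (I × C)) (Bad : (I → Option C) → Prop) :
    (overload w p).IsBounded O Bad w := by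
  intro g A hA
  refine card_le_one.2 fun f hf f' hf' => funext fun i => ?_
  obtain ⟨-, ⟨hw, hp⟩, hg⟩ := hA f hf
  obtain ⟨-, ⟨hw', hp'⟩, hg'⟩ := hA f' hf'
  obtain rfl | hi := eq_or_ne i w
  · rw [hw, hw']
  by_cases hip : i ∈ p.2.image Prod.fst
  · obtain ⟨a, ha, rfl⟩ := mem_image.1 hip
    rw [hp a ha, hp' a ha]
  · rw [hg i hi hip, hg' i hi hip]

theorem overload_hits {I C : Type*} {w : I} {f : I → Option C} {p : Σ _ : C, Finset (I × C)}
    (hw : f w = some p.1) (hp : ∀ a ∈ p.2, a.1 ≠ w ∧ f a.1 = some a.2) :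
    (overload w p).Hits w f := by
  refine ⟨⟨hw, fun a ha => (hp a ha).2⟩, fun h => ?_, fun i hi => ?_⟩
  · obtain ⟨a, ha, haw⟩ := mem_image.1 h
    exact (hp a ha).1 haw
  · obtain ⟨a, ha, rfl⟩ := mem_image.1 hi
    simp [(hp a ha).2]

theorem overload_cost {I C : Type*} {w : I} {p : Σ _ : C, Finset (I × C)}
    (hp : (p.2 : Set (I × C)).InjOn Prod.fst) (β : ℝ) :
    (overload w p).cost β = 1 / β ^ #p.2 := by
  simp only [overload, Obstruction.cost, card_image_of_injOn hp, Nat.cast_one]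

variable {V W : Type*} [Fintype V] {G : SimpleGraph V} {S : Set V} {π : V → W} {c : Sym2 V → ℕ}
  {f : S × Bool → Option (Sym2 V)} {O : S → Finset (Sym2 V)} {q : ℕ} {w : S × Bool}

/-- A choice of `w.1` puts this vertex in conflict with `v`. The other choice of `w.1` can be
released. -/
noncomputable def ownConflict (G : SimpleGraph V) (c : Sym2 V → ℕ) (q : ℕ) (w : S × Bool) (v : S) :
    Obstruction (S × Bool) (Sym2 V) where
  released := {(w.1, !w.2)}
  bound := 2 ^ (q + 4) * (q + 3) ^ 2
  occurs f := HasConflict G c f w.1 v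

/-- Choosing the edge `p.1` at the slot `w` puts another vertex `p.2.1` in conflict with `p.2.2`.
Both choices of `p.2.1` can be released. -/
noncomputable def otherConflict (G : SimpleGraph V) (c : Sym2 V → ℕ) (q : ℕ) (w : S × Bool)
    (p : Σ _ : Sym2 V, S × S) : Obstruction (S × Bool) (Sym2 V) where
  released := {(p.2.1, false), (p.2.1, true)}
  bound := 2 ^ (q + 4) * (q + 3) ^ 2
  occurs f := f w = some p.1 ∧ HasConflict G c f p.2.1 p.2.2

/-- The choices available outside the class `y` of edges leading to `y`. -/
noncomputable def incomingChoices (π : V → W) (O : S → Finset (Sym2 V)) (y : W) :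
    Finset ((S × Bool) × Sym2 V) :=
  {a | a.2 ∈ O a.1.1 ∧ π a.1.1 ≠ y ∧ y ∈ a.2.map π}

/-- The overloads that may occur at `w`. -/
noncomputable def overloads (π : V → W) (O : S → Finset (Sym2 V)) (q : ℕ) (w : S × Bool) :
    Finset (Σ _ : Sym2 V, Finset ((S × Bool) × Sym2 V)) :=
  (O w.1).sigma fun e => (e.map π).toFinset.biUnion fun y =>
    {T ∈ (incomingChoices π O y).powersetCard q | (T : Set ((S × Bool) × Sym2 V)).InjOn Prod.fst}

/-- The conflicts of vertices other than `w.1` that may occur at `w`. -/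
noncomputable def otherConflicts (G : SimpleGraph V) (O : S → Finset (Sym2 V)) (w : S × Bool) :
    Finset (Σ _ : Sym2 V, S × S) :=
  (O w.1).sigma fun e => {p | G.Adj p.1 p.2 ∧ (p.1.1 ∈ e ∨ p.2.1 ∈ e) ∧ p.1 ≠ w.1}

/-- The obstructions that may occur at `w`. -/
noncomputable def obstructionsAt (G : SimpleGraph V) (π : V → W) (c : Sym2 V → ℕ)
    (O : S → Finset (Sym2 V)) (q : ℕ) (w : S × Bool) : Finset (Obstruction (S × Bool) (Sym2 V)) :=
  (overloads π O q w).image (overload w) ∪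
    (({v : S | G.Adj w.1 v} : Finset S).image (ownConflict G c q w) ∪
      (otherConflicts G O w).image (otherConflict G c q w))

theorem ownConflict_isBounded (hπ : S.InjOn π)
    (hc : ∀ u ∈ S, Set.InjOn c (G.incidenceFinset u)) (hO : ∀ u, O u ⊆ G.incidenceFinset u) {v : S}
    (hv : G.Adj w.1 v) :
    (ownConflict G c q w v).IsBounded (fun i => O i.1) (IsUnusable G π c q) w := by
  intro g A hA
  refine card_le_of_hasConflict (fun h => hv.ne (congrArg _ h)) g (hc _ w.1.2)
    (fun f hf i e he => hO _ ((hA f hf).1.mem_list i e he))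
    (fun f hf => card_chosenAt_le_of_isExtensionAt hπ (hA f hf).1) (fun f hf => (hA f hf).2.1)
    fun f hf i hi => (hA f hf).2.2 i (fun h => hi (congrArg _ h)) fun h => hi ?_
  rw [mem_singleton.1 h]

theorem otherConflict_isBounded (hπ : S.InjOn π)
    (hc : ∀ u ∈ S, Set.InjOn c (G.incidenceFinset u)) (hO : ∀ u, O u ⊆ G.incidenceFinset u)
    {p : Σ _ : Sym2 V, S × S} (hp : G.Adj p.2.1 p.2.2) :
    (otherConflict G c q w p).IsBounded (fun i => O i.1) (IsUnusable G π c q) w := by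
  intro g A hA
  refine card_le_of_hasConflict (fun h => hp.ne (congrArg _ h))
    (fun i => if i = w then p.1 else g i) (hc _ p.2.1.2)
    (fun f hf i e he => hO _ ((hA f hf).1.mem_list i e he))
    (fun f hf => card_chosenAt_le_of_isExtensionAt hπ (hA f hf).1) (fun f hf => (hA f hf).2.1.2)
    fun f hf i hi => ?_
  obtain ⟨-, ⟨hw, -⟩, hg⟩ := hA f hf
  split_ifs with hiw
  · rw [hiw, hw]
  · refine hg i hiw fun h => hi ?_
    obtain h | h := mem_insert.1 h
    · rw [h]
    · rw [mem_singleton.1 h]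

theorem obstructionsAt_isBounded (hπ : S.InjOn π)
    (hc : ∀ u ∈ S, Set.InjOn c (G.incidenceFinset u)) (hO : ∀ u, O u ⊆ G.incidenceFinset u)
    (w : S × Bool) : ∀ τ ∈ obstructionsAt G π c O q w,
      τ.IsBounded (fun i => O i.1) (IsUnusable G π c q) w := by
  intro τ hτ
  obtain hτ | hτ | hτ := by simpa only [obstructionsAt, mem_union, mem_image] using hτ
  · obtain ⟨p, -, rfl⟩ := hτ
    exact overload_isBounded p _
  · obtain ⟨v, hv, rfl⟩ := hτ
    exact ownConflict_isBounded hπ hc hO (mem_filter.1 hv).2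
  · obtain ⟨p, hp, rfl⟩ := hτ
    exact otherConflict_isBounded hπ hc hO (mem_filter.1 (mem_sigma.1 hp).2).2.1

theorem exists_subset_incomingChoices (hf : ∀ i, ∀ e ∈ f i, e ∈ O i.1) {y : W}
    (hy : q < #(incoming π f y)) (w : S × Bool) :
    ∃ T ⊆ incomingChoices π O y, #T = q ∧ ∀ a ∈ T, a.1 ≠ w ∧ f a.1 = some a.2 := by
  let P := {a ∈ incomingChoices π O y | a.1 ≠ w ∧ f a.1 = some a.2}
  have himage : (incoming π f y).erase w ⊆ P.image Prod.fst := by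
    intro i hi
    obtain ⟨hiw, hi⟩ := mem_erase.1 hi
    obtain ⟨hne, e, he, hy⟩ := mem_incoming.1 hi
    refine mem_image.2 ⟨(i, e), mem_filter.2 ⟨?_, hiw, he⟩, rfl⟩
    exact mem_filter.2 ⟨mem_univ _, hf i e he, hne, hy⟩
  have hqP : q ≤ #P := calc
    q ≤ #(incoming π f y) - 1 := Nat.le_sub_one_of_lt hy
    _ ≤ #((incoming π f y).erase w) := pred_card_le_card_erase
    _ ≤ #P := (card_le_card himage).trans card_image_le
  obtain ⟨T, hTP, hT⟩ := exists_subset_card_eq hqP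
  exact ⟨T, hTP.trans (filter_subset _ _), hT, fun a ha => (mem_filter.1 (hTP ha)).2⟩

theorem exists_overload_hits (hf : IsExtensionAt (fun i => O i.1) (IsUnusable G π c q) w f)
    {y : W} (hy : q < #(incoming π f y)) :
    ∃ p ∈ overloads π O q w, (overload w p).Hits w f := by
  obtain ⟨e, he⟩ := Option.ne_none_iff_exists'.1 hf.ne_none
  obtain ⟨g, hfg, hg⟩ := hf.exists_not_bad
  have hw : w ∈ incoming π f y := by
    by_contra hw
    have hsub := incoming_erase_subset (π := π) hfg y
    rw [erase_eq_of_notMem hw] at hsub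
    exact hg (.inl ⟨y, hy.trans_le (card_le_card hsub)⟩)
  obtain ⟨-, e', he', hye⟩ := mem_incoming.1 hw
  obtain rfl : e = e' := Option.some.inj (he.symm.trans he')
  obtain ⟨T, hTO, hT, hTf⟩ := exists_subset_incomingChoices hf.mem_list hy w
  have hinj : (T : Set ((S × Bool) × Sym2 V)).InjOn Prod.fst := by
    intro a ha b hb hab
    refine Prod.ext hab (Option.some.inj ?_)
    rw [← (hTf a ha).2, hab, (hTf b hb).2]
  exact ⟨⟨e, T⟩, mem_sigma.2 ⟨hf.mem_list w e he, mem_biUnion.2 ⟨y, Sym2.mem_toFinset.2 hye,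
    mem_filter.2 ⟨mem_powersetCard.2 ⟨hTO, hT⟩, hinj⟩⟩⟩, overload_hits he hTf⟩

theorem HasConflict.ne_none {u v : S} (h : HasConflict G c f u v) (b : Bool) : f (u, b) ≠ none := by
  obtain ⟨J, -, K, -, hown, -⟩ := h
  obtain ⟨e, -, he⟩ := hown b
  simp [he]

theorem mem_or_mem_of_hasConflict {g : S × Bool → Option (Sym2 V)} {e : Sym2 V} {u v : S}
    (he : f w = some e) (hfg : ∀ i ≠ w, f i = g i) (hg : ¬ HasConflict G c g u v) (hu : u ≠ w.1)
    (h : HasConflict G c f u v) : u.1 ∈ e ∨ v.1 ∈ e := by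
  by_contra! hmem
  have hsub {x : V} (hx : x ∉ e) : chosenAt f x ⊆ chosenAt g x := fun e' he' =>
    mem_of_mem_insert_of_ne (chosenAt_subset_insert he hfg x he')
      fun hee' => hx (hee' ▸ (mem_chosenAt.1 he').1)
  refine hg (h.mono (fun b e he => ?_) (hsub hmem.1) (hsub hmem.2))
  rwa [← hfg _ fun huw => hu (congrArg Prod.fst huw)]

theorem exists_conflict_hits (hf : IsExtensionAt (fun i => O i.1) (IsUnusable G π c q) w f)
    {u v : S} (huv : G.Adj u v) (h : HasConflict G c f u v) :
    (∃ x : S, G.Adj w.1 x ∧ (ownConflict G c q w x).Hits w f) ∨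
      ∃ p ∈ otherConflicts G O w, (otherConflict G c q w p).Hits w f := by
  obtain ⟨e, he⟩ := Option.ne_none_iff_exists'.1 hf.ne_none
  obtain ⟨g, hfg, hg⟩ := hf.exists_not_bad
  obtain rfl | hu := eq_or_ne u w.1
  · refine .inl ⟨v, huv, h, fun hw => ?_, fun i hi => ?_⟩
    · simpa using congrArg Prod.snd (mem_singleton.1 hw)
    · rw [mem_singleton.1 hi]
      exact h.ne_none _
  · have hmem := mem_or_mem_of_hasConflict he hfg (fun h => hg (.inr ⟨u, v, huv, h⟩)) hu h
    refine .inr ⟨⟨e, u, v⟩, mem_sigma.2 ⟨hf.mem_list w e he,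
      mem_filter.2 ⟨mem_univ _, huv, hmem, hu⟩⟩, ⟨he, h⟩, fun hw => hu ?_, fun i hi => ?_⟩
    · obtain hw | hw := mem_insert.1 hw
      · rw [hw]
      · rw [mem_singleton.1 hw]
    · obtain rfl | hi := mem_insert.1 hi
      · exact h.ne_none _
      · rw [mem_singleton.1 hi]
        exact h.ne_none _

theorem exists_mem_obstructionsAt_hits
    (hf : IsExtensionAt (fun i => O i.1) (IsUnusable G π c q) w f) (hbad : IsUnusable G π c q f) :
    ∃ τ ∈ obstructionsAt G π c O q w, τ.Hits w f := by
  obtain ⟨y, hy⟩ | ⟨u, v, huv, h⟩ := hbad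
  · obtain ⟨p, hp, hits⟩ := exists_overload_hits hf hy
    exact ⟨_, mem_union_left _ (mem_image_of_mem _ hp), hits⟩
  · obtain ⟨x, hx, hits⟩ | ⟨p, hp, hits⟩ := exists_conflict_hits hf huv h
    · exact ⟨_, mem_union_right _ (mem_union_left _ (mem_image_of_mem _ (by simpa using hx))), hits⟩
    · exact ⟨_, mem_union_right _ (mem_union_right _ (mem_image_of_mem _ hp)), hits⟩

end Obstructions

section SelectionExists

variable {V W : Type*} [Fintype V] {G : SimpleGraph V} {S : Set V} {π : V → W} {c : Sym2 V → ℕ}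
  {O : S → Finset (Sym2 V)} {D m q : ℕ}

/-- The edges of `G` with an end in `S`. -/
noncomputable def edgesMeeting (G : SimpleGraph V) (S : Set V) : Finset (Sym2 V) :=
  {e ∈ G.edgeFinset | ∃ v ∈ e, v ∈ S}

theorem mem_edgesMeeting {e : Sym2 V} :
    e ∈ edgesMeeting G S ↔ e ∈ G.edgeSet ∧ ∃ v ∈ e, v ∈ S := by
  simp [edgesMeeting]

theorem incidenceFinset_subset_edgesMeeting {u : V} (hu : u ∈ S) :
    G.incidenceFinset u ⊆ edgesMeeting G S := by
  intro e he
  obtain ⟨he, hue⟩ := (G.mem_incidenceFinset u e).1 he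
  exact mem_edgesMeeting.2 ⟨he, u, hue, hu⟩

theorem card_toFinset_le_two {α : Type*} (e : Sym2 α) : #e.toFinset ≤ 2 := by
  rw [Sym2.card_toFinset]
  split_ifs <;> norm_num

theorem card_incomingChoices_le (hO : ∀ u, O u ⊆ G.incidenceFinset u) {y : W}
    (hD : #{e ∈ edgesMeeting G S | y ∈ e.map π} ≤ D) : #(incomingChoices π O y) ≤ 2 * D := by
  have mem_inc {a} (ha : a ∈ incomingChoices π O y) :
      a.2 ∈ G.incidenceFinset a.1.1 ∧ π a.1.1 ≠ y ∧ y ∈ a.2.map π :=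
    (mem_filter.1 ha).2.imp_left (hO _ ·)
  calc #(incomingChoices π O y)
      ≤ #((univ : Finset Bool) ×ˢ {e ∈ edgesMeeting G S | y ∈ e.map π}) := by
        refine card_le_card_of_injOn (fun a => (a.1.2, a.2)) (fun a ha => ?_) ?_
        · obtain ⟨hinc, -, hy⟩ := mem_inc ha
          exact mem_product.2 ⟨mem_univ _, mem_filter.2
            ⟨incidenceFinset_subset_edgesMeeting a.1.1.2 hinc, hy⟩⟩
        · rintro ⟨⟨u, b⟩, e⟩ ha ⟨⟨u', b'⟩, e'⟩ ha' h
          obtain ⟨rfl, rfl⟩ := Prod.mk.inj h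
          obtain ⟨hu, huy, hy⟩ := mem_inc ha
          obtain ⟨hu', huy', -⟩ := mem_inc ha'
          have huu' : u = u' := by
            by_contra hne
            obtain rfl : e = s(u.1, u'.1) := (Sym2.mem_and_mem_iff (Subtype.coe_ne_coe.2 hne)).1
              ⟨((G.mem_incidenceFinset _ _).1 hu).2, ((G.mem_incidenceFinset _ _).1 hu').2⟩
            obtain h | h := Sym2.mem_iff.1 hy
            exacts [huy h.symm, huy' h.symm]
          rw [huu']
    _ ≤ 2 * D := by
        rw [card_product, card_univ, Fintype.card_bool]
        exact Nat.mul_le_mul_left 2 hD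

theorem card_overloads_le (hin : ∀ y, #(incomingChoices π O y) ≤ 2 * D) (w : S × Bool) :
    #(overloads π O q w) ≤ #(O w.1) * (2 * (2 * D).choose q) := by
  rw [overloads, card_sigma, ← smul_eq_mul]
  refine sum_le_card_nsmul _ _ _ fun e _ => ?_
  refine (card_biUnion_le_card_mul _ _ ((2 * D).choose q) fun y _ => ?_).trans
    (Nat.mul_le_mul_right _ (card_toFinset_le_two _))
  exact (card_filter_le _ _).trans <|
    (card_powersetCard _ _).trans_le (Nat.choose_le_choose q (hin y))

theorem card_adj_fst_mem_le {X : Type*} [Fintype X] {φ : X → V} (hφ : φ.Injective)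
    (hdeg : ∀ v, G.degree v ≤ D) (e : Sym2 V) :
    #{p : X × X | G.Adj (φ p.1) (φ p.2) ∧ φ p.1 ∈ e} ≤ 2 * D := by
  calc #{p : X × X | G.Adj (φ p.1) (φ p.2) ∧ φ p.1 ∈ e}
      ≤ #(e.toFinset.sigma fun v => G.neighborFinset v) := by
        refine card_le_card_of_injOn (fun p => ⟨φ p.1, φ p.2⟩) (fun p hp => ?_)
          fun p _ p' _ h => ?_
        · simpa [and_comm] using hp
        · simpa [Prod.ext_iff, hφ.eq_iff] using h
    _ ≤ #e.toFinset * D := by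
        rw [card_sigma, ← smul_eq_mul]
        exact sum_le_card_nsmul _ _ _ fun v _ => hdeg v
    _ ≤ 2 * D := Nat.mul_le_mul_right D (card_toFinset_le_two e)

theorem card_otherConflicts_le (hdeg : ∀ v, G.degree v ≤ D) (w : S × Bool) :
    #(otherConflicts G O w) ≤ #(O w.1) * (4 * D) := by
  rw [otherConflicts, card_sigma, ← smul_eq_mul]
  refine sum_le_card_nsmul _ _ _ fun e _ => ?_
  have hsub : ({p | G.Adj p.1 p.2 ∧ (p.1.1 ∈ e ∨ p.2.1 ∈ e) ∧ p.1 ≠ w.1} : Finset (S × S)) ⊆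
      ({p | G.Adj p.1 p.2 ∧ p.1.1 ∈ e} : Finset (S × S)) ∪
        ({p | G.Adj p.1 p.2 ∧ p.1.1 ∈ e} : Finset (S × S)).image Prod.swap := by
    rintro ⟨u, v⟩ h
    obtain ⟨hadj, hu | hv, -⟩ := (mem_filter.1 h).2
    · exact mem_union_left _ (mem_filter.2 ⟨mem_univ _, hadj, hu⟩)
    · exact mem_union_right _
        (mem_image.2 ⟨(v, u), mem_filter.2 ⟨mem_univ _, hadj.symm, hv⟩, rfl⟩)
  calc _ ≤ _ := card_le_card hsub
    _ ≤ 2 * D + 2 * D := (card_union_le _ _).trans <| Nat.add_le_add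
        (card_adj_fst_mem_le Subtype.val_injective hdeg e)
        (card_image_le.trans (card_adj_fst_mem_le Subtype.val_injective hdeg e))
    _ = 4 * D := by ring

theorem card_adj_le (hdeg : ∀ v, G.degree v ≤ D) (u : S) : #{v : S | G.Adj u v} ≤ D := by
  refine le_trans (card_le_card_of_injOn Subtype.val (fun v hv => ?_)
    Subtype.val_injective.injOn) (hdeg u)
  simpa using hv

theorem sum_cost_obstructionsAt_le (hO : ∀ u, O u ⊆ G.incidenceFinset u) (hm : ∀ u, #(O u) = m)
    (hdeg : ∀ v, G.degree v ≤ D) (hclass : ∀ y, #{e ∈ edgesMeeting G S | y ∈ e.map π} ≤ D)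
    {β : ℝ} (hβ : 0 ≤ β) (w : S × Bool) :
    ∑ τ ∈ obstructionsAt G π c O q w, τ.cost β ≤
      (m * (2 * (2 * D).choose q) : ℕ) * (1 / β ^ q) +
        (D * ((2 ^ (q + 4) * (q + 3) ^ 2 : ℕ) / β) +
          (m * (4 * D) : ℕ) * ((2 ^ (q + 4) * (q + 3) ^ 2 : ℕ) / β ^ 2)) := by
  have hoverload : ∀ p ∈ overloads π O q w, (overload w p).cost β = 1 / β ^ q := by
    intro p hp
    obtain ⟨y, -, hT⟩ := mem_biUnion.1 (mem_sigma.1 hp).2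
    obtain ⟨hT, hinj⟩ := mem_filter.1 hT
    rw [overload_cost hinj, (mem_powersetCard.1 hT).2]
  refine (sum_cost_union_le _ _ hβ).trans (add_le_add ?_ ((sum_cost_union_le _ _ hβ).trans
    (add_le_add ?_ ?_)))
  · refine (sum_cost_image_le _ hβ hoverload).trans ?_
    gcongr
    rw [← hm w.1]
    exact card_overloads_le (fun y => card_incomingChoices_le hO (hclass y)) w
  · refine (sum_cost_image_le _ hβ fun v _ => ?_).trans (mul_le_mul_of_nonneg_right
      (Nat.cast_le.2 (card_adj_le hdeg w.1)) (by positivity))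
    rw [Obstruction.cost, ownConflict, card_singleton, pow_one]
  · refine (sum_cost_image_le _ hβ fun p _ => ?_).trans (mul_le_mul_of_nonneg_right
      (Nat.cast_le.2 (hm w.1 ▸ card_otherConflicts_le hdeg w)) (by positivity))
    rw [Obstruction.cost, otherConflict, card_pair (by simp)]

-- Overloads cost at most a `4 / 100` share of `m`; the two kinds of conflict have bounded total
-- cost, which is what a large `D` absorbs.
theorem selection_cost_le (hm : 9 * D ≤ 20 * m) (hD : 10 ^ 12 ≤ D) :
    (9 / 10 * m : ℝ) + ((m * (2 * (2 * D).choose 15) : ℕ) * (1 / (9 / 10 * m : ℝ) ^ 15) +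
      (D * ((2 ^ (15 + 4) * (15 + 3) ^ 2 : ℕ) / (9 / 10 * m : ℝ)) +
        (m * (4 * D) : ℕ) * ((2 ^ (15 + 4) * (15 + 3) ^ 2 : ℕ) / (9 / 10 * m : ℝ) ^ 2))) ≤ m := by
  have hm' : (9 * D : ℝ) ≤ 20 * m := by exact_mod_cast hm
  have hD' : (10 ^ 12 : ℝ) ≤ D := by exact_mod_cast hD
  have hD_le : (D : ℝ) ≤ 20 / 9 * m := by linarith
  have le_m : (45 / 100 * 10 ^ 12 : ℝ) ≤ m := by linarith
  have : (0 : ℝ) < m := by linarith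
  have hchoose : ((2 * D).choose 15 : ℝ) ≤ (40 / 9 * m : ℝ) ^ 15 / (Nat.factorial 15 : ℕ) := by
    refine (Nat.choose_le_pow_div 15 (2 * D)).trans ?_
    gcongr
    push_cast
    linarith
  have overload_le : ((m * (2 * (2 * D).choose 15) : ℕ) * (1 / (9 / 10 * m : ℝ) ^ 15)) ≤
      4 / 100 * m := by
    rw [mul_one_div, div_le_iff₀ (by positivity)]
    push_cast
    calc (m * (2 * (2 * D).choose 15) : ℝ)
        ≤ m * (2 * ((40 / 9 * m : ℝ) ^ 15 / (Nat.factorial 15 : ℕ))) := by gcongr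
      _ = (m * (m : ℝ) ^ 15) * (2 * ((40 / 9) ^ 15 / (Nat.factorial 15 : ℕ))) := by
          rw [mul_pow]; ring
      _ ≤ (m * (m : ℝ) ^ 15) * (4 / 100 * (9 / 10) ^ 15) :=
          mul_le_mul_of_nonneg_left (by norm_num [Nat.factorial]) (by positivity)
      _ = _ := by rw [mul_pow]; ring
  have own_le : D * ((2 ^ (15 + 4) * (15 + 3) ^ 2 : ℕ) / (9 / 10 * m : ℝ)) ≤ 169869312 * 3 := by
    norm_num only [Nat.cast_ofNat]
    rw [← mul_div_assoc, div_le_iff₀ (by positivity)]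
    linarith
  have other_le : (m * (4 * D) : ℕ) *
      ((2 ^ (15 + 4) * (15 + 3) ^ 2 : ℕ) / (9 / 10 * m : ℝ) ^ 2) ≤ 169869312 * 12 := by
    norm_num only [Nat.cast_ofNat]
    push_cast
    rw [← mul_div_assoc, div_le_iff₀ (by positivity)]
    have : (m : ℝ) * D ≤ m * (20 / 9 * m) := by gcongr
    nlinarith
  linarith

theorem exists_selection [Finite W] (hπ : S.InjOn π)
    (hc : ∀ u ∈ S, Set.InjOn c (G.incidenceFinset u)) (hS : ∀ u ∈ S, 9 * D < 20 * G.degree u)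
    (hdeg : ∀ v, G.degree v ≤ D) (hclass : ∀ y, #{e ∈ edgesMeeting G S | y ∈ e.map π} ≤ D)
    (hD : 10 ^ 12 ≤ D) :
    ∃ f : S × Bool → Sym2 V, (∀ i, f i ∈ G.incidenceFinset i.1) ∧
      ¬ IsUnusable G π c 15 fun i => some (f i) := by
  have hO (u : S) : ∃ O ⊆ G.incidenceFinset u, #O = 9 * D / 20 + 1 := by
    refine exists_subset_card_eq ?_
    have := hS u u.2
    rw [G.card_incidenceFinset_eq_degree]
    omega
  choose O hO hm using hO
  have hsum (w : S × Bool) := (add_le_add_right (sum_cost_obstructionsAt_le (c := c) (q := 15) hO hm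
    hdeg hclass (β := 9 / 10 * (9 * D / 20 + 1 : ℕ)) (by positivity) w) _).trans
      (selection_cost_le (by omega) hD)
  obtain ⟨f, hf, hgood⟩ := exists_assignment_not_bad (by positivity) (fun f g => IsUnusable.mono)
    not_isUnusable_none (obstructionsAt G π c O 15) (obstructionsAt_isBounded hπ hc hO)
    (fun w f hf => exists_mem_obstructionsAt_hits hf)
    (fun w => (hsum w).trans_eq (by rw [hm]))
  exact ⟨f, fun i => hO _ (hf i), hgood⟩

end SelectionExists

section Palettes

variable {I C : Type*} [Fintype C]

/-- The colours in `b` together with those that the partial colouring `f` uses on `F`. -/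
noncomputable def palette (b : Finset C) (f : I → Option C) (F : Finset I) : Finset C :=
  b ∪ ({c | ∃ i ∈ F, f i = some c} : Finset C)

theorem mem_palette {b : Finset C} {f : I → Option C} {F : Finset I} {c : C} :
    c ∈ palette b f F ↔ c ∈ b ∨ ∃ i ∈ F, f i = some c := by
  simp [palette]

theorem palette_congr {b : Finset C} {f g : I → Option C} {F : Finset I}
    (h : ∀ i ∈ F, f i = g i) : palette b f F = palette b g F := by
  ext c
  rw [mem_palette, mem_palette]
  exact or_congr_right (exists_congr fun i => and_congr_right fun hi => by rw [h i hi])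

theorem card_palette_sdiff_le [DecidableEq I] (b : Finset C) (f : I → Option C) (F R : Finset I) :
    #(palette b f F \ palette b f (F \ R)) ≤ #R := by
  calc #(palette b f F \ palette b f (F \ R))
      = #((palette b f F \ palette b f (F \ R)).image some) :=
        (card_image_of_injective _ (Option.some_injective C)).symm
    _ ≤ #(R.image f) := card_le_card fun o ho => by
        obtain ⟨c, hc, rfl⟩ := mem_image.1 ho
        obtain ⟨hc, hc'⟩ := mem_sdiff.1 hc
        rw [mem_palette, not_or] at hc'
        obtain ⟨i, hi, hic⟩ := (mem_palette.1 hc).resolve_left hc'.1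
        refine mem_image.2 ⟨i, ?_, hic⟩
        by_contra hiR
        exact hc'.2 ⟨i, mem_sdiff.2 ⟨hi, hiR⟩, hic⟩
    _ ≤ #R := card_image_le

/-- If the palette on `F` and the values outside `R` are prescribed, then only `#R` colours are
left for the indices in `R`. -/
theorem card_le_of_palette_eq [DecidableEq I] {b P : Finset C} {F R : Finset I} {g : I → Option C}
    {A : Finset (I → Option C)} (hpalette : ∀ f ∈ A, palette b f F = P)
    (hnew : ∀ f ∈ A, ∀ i ∈ R, i ∈ F ∧ ∃ c, f i = some c ∧ c ∉ palette b f (F \ R))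
    (hfg : ∀ f ∈ A, ∀ i ∉ R, f i = g i) : #A ≤ #R ^ #R := by
  obtain rfl | ⟨f₀, hf₀⟩ := A.eq_empty_or_nonempty
  · simp
  have hrest : ∀ f ∈ A, palette b f (F \ R) = palette b g (F \ R) := fun f hf =>
    palette_congr fun i hi => hfg f hf i (mem_sdiff.1 hi).2
  let Y := (P \ palette b g (F \ R)).image some
  have hY : #Y ≤ #R := by
    simp only [Y, ← hpalette f₀ hf₀, ← hrest f₀ hf₀]
    exact card_image_le.trans (card_palette_sdiff_le b f₀ F R)
  calc #A ≤ #(R.pi fun _ => Y) := by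
        refine card_le_card_of_injOn (fun f i _ => f i) (fun f hf => mem_pi.2 fun i hi => ?_)
          fun f hf f' hf' h => funext fun i => ?_
        · obtain ⟨hiF, c, hc, hcR⟩ := hnew f hf i hi
          refine mem_image.2 ⟨c, mem_sdiff.2 ⟨?_, hrest f hf ▸ hcR⟩, hc.symm⟩
          exact hpalette f hf ▸ mem_palette.2 (.inr ⟨i, hiF, hc⟩)
        · by_cases hi : i ∈ R
          · exact congrFun₂ h i hi
          · rw [hfg f hf i hi, hfg f' hf' i hi]
    _ = #Y ^ #R := by rw [card_pi, prod_const]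
    _ ≤ #R ^ #R := Nat.pow_le_pow_left hY _

end Palettes

section ListColouring

variable {V C : Type*} {L : SimpleGraph V} {B : V → Finset C}
  {f g : L.edgeSet → Option C} {u v : V} {w : L.edgeSet} {D : ℕ}

/-- Two edges with a common end have received the same colour. -/
def HasClash (f : L.edgeSet → Option C) : Prop :=
  ∃ e e' : L.edgeSet, e ≠ e' ∧ (∃ x ∈ e.1, x ∈ e'.1) ∧ f e ≠ none ∧ f e = f e'

/-- Colouring `w` makes it clash with `e`. -/
def clash (w e : L.edgeSet) : Obstruction L.edgeSet C where
  released := ∅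
  bound := 1
  occurs f := f w = f e

theorem clash_isBounded {e : L.edgeSet} (he : e ≠ w) (O : L.edgeSet → Finset C)
    (Bad : (L.edgeSet → Option C) → Prop) : (clash w e).IsBounded O Bad w := by
  intro g A hA
  refine card_le_one.2 fun f hf f' hf' => funext fun i => ?_
  obtain ⟨-, hw, hg⟩ := hA f hf
  obtain ⟨-, hw', hg'⟩ := hA f' hf'
  obtain rfl | hi := eq_or_ne i w
  · rw [hw, hw', hg e he (notMem_empty e), hg' e he (notMem_empty e)]
  · rw [hg i hi (notMem_empty i), hg' i hi (notMem_empty i)]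

variable [Fintype C]

theorem notMem_palette_of_not_hasClash {b : Finset C} {F : Finset L.edgeSet} {e : L.edgeSet} {c : C}
    (hclash : ¬ HasClash f) (hF : ∀ e' ∈ F, e' ≠ e ∧ u ∈ e'.1) (hu : u ∈ e.1) (he : f e = some c)
    (hc : c ∉ b) : c ∉ palette b f F := by
  rw [mem_palette]
  rintro (h | ⟨e', he', hce'⟩)
  · exact hc h
  · obtain ⟨hne, hue'⟩ := hF e' he'
    exact hclash ⟨e, e', hne.symm, ⟨u, hu, hue'⟩, by simp [he], he.trans hce'.symm⟩

variable [Fintype V]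

/-- The edges of `L` with end `u` but not `v`. -/
noncomputable def awayEdges (L : SimpleGraph V) (u v : V) : Finset L.edgeSet :=
  {e | u ∈ e.1 ∧ v ∉ e.1}

theorem mem_awayEdges {e : L.edgeSet} : e ∈ awayEdges L u v ↔ u ∈ e.1 ∧ v ∉ e.1 := by
  simp [awayEdges]

/-- The edge `uv` is not isolated in `L`, all edges meeting it are coloured, and its ends see
the same colours beyond that of `uv` itself, when each vertex `x` also sees those in `B x`. -/
structure IsTied (B : V → Finset C) (f : L.edgeSet → Option C) (u v : V) : Prop where
  adj : L.Adj u v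
  nonempty : (awayEdges L u v ∪ awayEdges L v u).Nonempty
  ne_none : ∀ e ∈ awayEdges L u v ∪ awayEdges L v u, f e ≠ none
  palette_eq : palette (B u) f (awayEdges L u v) = palette (B v) f (awayEdges L v u)

/-- The partial colouring `f` is not as desired: it is improper or leaves adjacent vertices
indistinguishable. -/
def IsFlawed (B : V → Finset C) (f : L.edgeSet → Option C) : Prop :=
  HasClash f ∨ ∃ u v, IsTied B f u v

theorem IsTied.symm (h : IsTied B f u v) : IsTied B f v u :=
  ⟨h.adj.symm, union_comm (awayEdges L u v) _ ▸ h.nonempty,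
    union_comm (awayEdges L u v) _ ▸ h.ne_none, h.palette_eq.symm⟩

theorem IsTied.congr (h : IsTied B f u v)
    (hfg : ∀ e ∈ awayEdges L u v ∪ awayEdges L v u, f e = g e) : IsTied B g u v where
  adj := h.adj
  nonempty := h.nonempty
  ne_none e he := hfg e he ▸ h.ne_none e he
  palette_eq := by
    rw [← palette_congr fun e he => hfg e (mem_union_left _ he), h.palette_eq,
      palette_congr fun e he => hfg e (mem_union_right _ he)]

theorem IsFlawed.mono (h : ∀ e, ∀ c ∈ f e, c ∈ g e) (hf : IsFlawed B f) : IsFlawed B g := by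
  have hfg {e} (he : f e ≠ none) : f e = g e := by
    obtain ⟨c, hc⟩ := Option.ne_none_iff_exists'.1 he
    rw [hc, h e c hc]
  obtain ⟨e, e', hne, hx, he, hee'⟩ | ⟨u, v, hf⟩ := hf
  · exact .inl ⟨e, e', hne, hx, hfg he ▸ he, by rw [← hfg he, ← hfg (hee' ▸ he), hee']⟩
  · exact .inr ⟨u, v, hf.congr fun e he => hfg (hf.ne_none e he)⟩

theorem not_isFlawed_none : ¬ IsFlawed B fun _ : L.edgeSet => none := by
  rintro (⟨e, e', -, -, he, -⟩ | ⟨u, v, h⟩)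
  · exact he rfl
  · obtain ⟨e, he⟩ := h.nonempty
    exact h.ne_none e he rfl

/-- The colours that `B` allows on an edge. -/
noncomputable def allowedColours (B : V → Finset C) (e : L.edgeSet) : Finset C :=
  {c | ∀ v ∈ e.1, c ∉ B v}

theorem mem_allowedColours {e : L.edgeSet} {c : C} :
    c ∈ allowedColours B e ↔ ∀ v ∈ e.1, c ∉ B v := by
  simp [allowedColours]

/-- Colouring an edge at `p.1` ties this vertex to `p.2`. Fewer obstructions of this kind would be
affordable without releasing the edges in `R`. -/
noncomputable def tie (B : V → Finset C) (R : Finset L.edgeSet) (p : V × V) :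
    Obstruction L.edgeSet C where
  released := R
  bound := (#R + 1) ^ (#R + 1)
  occurs f := IsTied B f p.1 p.2 ∧ ¬ HasClash f

theorem tie_isBounded {R : Finset L.edgeSet} {p : V × V} (hw : w ∈ awayEdges L p.1 p.2)
    (hR : R ⊆ awayEdges L p.1 p.2) (hwR : w ∉ R) (Bad : (L.edgeSet → Option C) → Prop) :
    (tie B R p).IsBounded (allowedColours B) Bad w := by
  intro g A hA
  have hinsert : ∀ e ∈ insert w R, e ∈ awayEdges L p.1 p.2 := fun e he =>
    (mem_insert.1 he).elim (· ▸ hw) (hR ·)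
  have hfg : ∀ f ∈ A, ∀ e ∉ insert w R, f e = g e := fun f hf e he => by
    rw [mem_insert, not_or] at he
    exact (hA f hf).2.2 e he.1 he.2
  refine (card_le_of_palette_eq (b := B p.1) (P := palette (B p.2) g (awayEdges L p.2 p.1))
    (fun f hf => ?_) (fun f hf e he => ⟨hinsert e he, ?_⟩) hfg).trans_eq ?_
  · rw [(hA f hf).2.1.1.palette_eq]
    refine palette_congr fun e he => hfg f hf e fun h => ?_
    exact (mem_awayEdges.1 (hinsert e h)).2 (mem_awayEdges.1 he).1
  · obtain ⟨hext, ⟨htied, hclash⟩, -⟩ := hA f hf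
    have hue := (mem_awayEdges.1 (hinsert e he)).1
    obtain ⟨c, hc⟩ := Option.ne_none_iff_exists'.1
      (htied.ne_none e (mem_union_left _ (hinsert e he)))
    refine ⟨c, hc, notMem_palette_of_not_hasClash hclash (fun e' he' => ?_) hue hc
      (mem_allowedColours.1 (hext.mem_list e c hc) _ hue)⟩
    obtain ⟨he', hR'⟩ := mem_sdiff.1 he'
    exact ⟨fun h => hR' (h ▸ he), (mem_awayEdges.1 he').1⟩
  · rw [card_insert_of_notMem hwR]
    rfl

/-- The edges sharing exactly one end with `w`. -/
noncomputable def adjacentEdges (w : L.edgeSet) : Finset L.edgeSet :=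
  {e | e ≠ w ∧ ∃ x ∈ e.1, x ∈ w.1}

/-- The adjacent pairs for which `w` is the only edge at the first vertex apart from the edge
joining the pair. -/
noncomputable def loneAwayPairs (w : L.edgeSet) : Finset (V × V) :=
  {p | L.Adj p.1 p.2 ∧ awayEdges L p.1 p.2 = {w}}

/-- The adjacent pairs for which `w` is one of several edges at the first vertex apart from the
edge joining the pair. -/
noncomputable def nonloneAwayPairs (w : L.edgeSet) : Finset (V × V) :=
  {p | L.Adj p.1 p.2 ∧ w ∈ awayEdges L p.1 p.2 ∧ ∃ e ∈ awayEdges L p.1 p.2, e ≠ w}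

/-- An edge other than `w` at the first vertex of a pair in `nonloneAwayPairs w` and not at the
second (`w` itself for other pairs). -/
noncomputable def otherAwayEdge (w : L.edgeSet) (p : V × V) : L.edgeSet :=
  if h : ∃ e ∈ awayEdges L p.1 p.2, e ≠ w then h.choose else w

theorem otherAwayEdge_spec {p : V × V} (hp : p ∈ nonloneAwayPairs w) :
    otherAwayEdge w p ∈ awayEdges L p.1 p.2 ∧ otherAwayEdge w p ≠ w := by
  have h := (mem_filter.1 hp).2.2.2
  rw [otherAwayEdge, dif_pos h]
  exact h.choose_spec

/-- The obstructions that may occur when `w` is coloured. -/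
noncomputable def colouringObstructionsAt (B : V → Finset C) (w : L.edgeSet) :
    Finset (Obstruction L.edgeSet C) :=
  (adjacentEdges w).image (clash w) ∪ ((loneAwayPairs w).image (tie B ∅) ∪
    (nonloneAwayPairs w).image fun p => tie B {otherAwayEdge w p} p)

theorem colouringObstructionsAt_isBounded (w : L.edgeSet) (Bad : (L.edgeSet → Option C) → Prop) :
    ∀ τ ∈ colouringObstructionsAt B w, τ.IsBounded (allowedColours B) Bad w := by
  intro τ hτ
  obtain hτ | hτ | hτ := by simpa only [colouringObstructionsAt, mem_union, mem_image] using hτ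
  · obtain ⟨e, he, rfl⟩ := hτ
    exact clash_isBounded (mem_filter.1 he).2.1 _ _
  · obtain ⟨p, hp, rfl⟩ := hτ
    have hw : w ∈ awayEdges L p.1 p.2 := (mem_filter.1 hp).2.2 ▸ mem_singleton_self w
    exact tie_isBounded hw (empty_subset _) (notMem_empty w) _
  · obtain ⟨p, hp, rfl⟩ := hτ
    obtain ⟨hmem, hne⟩ := otherAwayEdge_spec hp
    exact tie_isBounded (mem_filter.1 hp).2.2.1 (singleton_subset_iff.2 hmem)
      (fun h => hne (mem_singleton.1 h).symm) _

theorem exists_clash_hits {O : L.edgeSet → Finset C} (hf : IsExtensionAt O (IsFlawed B) w f)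
    (hclash : HasClash f) : ∃ e ∈ adjacentEdges w, (clash w e).Hits w f := by
  obtain ⟨g, hfg, hg⟩ := hf.exists_not_bad
  obtain ⟨e, e', hne, ⟨x, hx, hx'⟩, he, hee'⟩ := hclash
  have hw : e = w ∨ e' = w := by
    by_contra! h
    exact hg (.inl ⟨e, e', hne, ⟨x, hx, hx'⟩, hfg e h.1 ▸ he, by
      rw [← hfg e h.1, ← hfg e' h.2, hee']⟩)
  obtain rfl | rfl := hw
  · exact ⟨e', mem_filter.2 ⟨mem_univ _, hne.symm, x, hx', hx⟩, hee', notMem_empty _,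
      by simp [clash]⟩
  · exact ⟨e, mem_filter.2 ⟨mem_univ _, hne, x, hx, hx'⟩, hee'.symm, notMem_empty _,
      by simp [clash]⟩

theorem exists_isTied_mem_awayEdges {O : L.edgeSet → Finset C}
    (hf : IsExtensionAt O (IsFlawed B) w f) (h : IsTied B f u v) :
    ∃ p : V × V, IsTied B f p.1 p.2 ∧ w ∈ awayEdges L p.1 p.2 := by
  obtain ⟨g, hfg, hg⟩ := hf.exists_not_bad
  have hw : w ∈ awayEdges L u v ∪ awayEdges L v u := by
    by_contra hw
    exact hg (.inr ⟨u, v, h.congr fun e he => hfg e fun hew => hw (hew ▸ he)⟩)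
  obtain hw | hw := mem_union.1 hw
  · exact ⟨(u, v), h, hw⟩
  · exact ⟨(v, u), h.symm, hw⟩

theorem exists_mem_colouringObstructionsAt_hits {O : L.edgeSet → Finset C}
    (hf : IsExtensionAt O (IsFlawed B) w f) (hbad : IsFlawed B f) :
    ∃ τ ∈ colouringObstructionsAt B w, τ.Hits w f := by
  by_cases hclash : HasClash f
  · obtain ⟨e, he, hits⟩ := exists_clash_hits hf hclash
    exact ⟨_, mem_union_left _ (mem_image_of_mem _ he), hits⟩
  obtain ⟨u, v, h⟩ := hbad.resolve_left hclash
  obtain ⟨p, hp, hw⟩ := exists_isTied_mem_awayEdges hf h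
  by_cases hother : ∃ e ∈ awayEdges L p.1 p.2, e ≠ w
  · have hmem : p ∈ nonloneAwayPairs w := mem_filter.2 ⟨mem_univ _, hp.adj, hw, hother⟩
    obtain ⟨haway, hne⟩ := otherAwayEdge_spec hmem
    refine ⟨_, mem_union_right _ (mem_union_right _ (mem_image_of_mem _ hmem)), ⟨hp, hclash⟩,
      fun h => hne (mem_singleton.1 h).symm, fun e he => ?_⟩
    rw [mem_singleton.1 he]
    exact hp.ne_none _ (mem_union_left _ haway)
  · have hmem : p ∈ loneAwayPairs w :=
      mem_filter.2 ⟨mem_univ _, hp.adj, eq_singleton_iff_unique_mem.2 ⟨hw, by simpa using hother⟩⟩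
    exact ⟨_, mem_union_right _ (mem_union_left _ (mem_image_of_mem _ hmem)), ⟨hp, hclash⟩,
      notMem_empty _, by simp [tie]⟩

theorem card_loneAwayPairs_le (w : L.edgeSet) : #(loneAwayPairs w) ≤ 2 := by
  refine (card_le_card_of_injOn (t := w.1.toFinset) Prod.fst (fun p hp => ?_) ?_).trans
    (card_toFinset_le_two w.1)
  · have hw : w ∈ awayEdges L p.1 p.2 := (mem_filter.1 hp).2.2 ▸ mem_singleton_self w
    exact Sym2.mem_toFinset.2 (mem_awayEdges.1 hw).1
  · rintro ⟨u, v⟩ hp ⟨u', v'⟩ hp' (rfl : u = u')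
    obtain ⟨-, huv, hw⟩ := mem_filter.1 hp
    obtain ⟨-, huv', hw'⟩ := mem_filter.1 hp'
    by_contra hne
    have hmem : ⟨s(u, v), huv⟩ ∈ awayEdges L u v' := by
      refine mem_awayEdges.2 ⟨Sym2.mem_mk_left u v, fun h => ?_⟩
      obtain h | h := Sym2.mem_iff.1 h
      · exact huv'.ne h.symm
      · exact hne (congrArg _ h.symm)
    have huvw : ⟨s(u, v), huv⟩ = w := mem_singleton.1 (hw' ▸ hmem)
    have hwv : v ∉ w.1 := (mem_awayEdges.1 (hw ▸ mem_singleton_self w : w ∈ awayEdges L u v)).2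
    exact hwv (huvw ▸ Sym2.mem_mk_right u v)

theorem card_adjacentEdges_le {a b : V} (hab : s(a, b) ∈ L.edgeSet) :
    #(adjacentEdges ⟨s(a, b), hab⟩) ≤ L.degree a + L.degree b := by
  calc #(adjacentEdges ⟨s(a, b), hab⟩)
      ≤ #(L.incidenceFinset a ∪ L.incidenceFinset b) := by
        refine card_le_card_of_injOn Subtype.val (fun e he => ?_) Subtype.val_injective.injOn
        obtain ⟨-, -, x, hx, hx'⟩ := mem_filter.1 he
        obtain rfl | rfl := Sym2.mem_iff.1 hx'
        · exact mem_union_left _ ((L.mem_incidenceFinset _ _).2 ⟨e.2, hx⟩)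
        · exact mem_union_right _ ((L.mem_incidenceFinset _ _).2 ⟨e.2, hx⟩)
    _ ≤ L.degree a + L.degree b := by
        rw [← L.card_incidenceFinset_eq_degree, ← L.card_incidenceFinset_eq_degree]
        exact card_union_le _ _

theorem card_le_card_allowedColours {a b : V} (hab : s(a, b) ∈ L.edgeSet) :
    Fintype.card C ≤ #(allowedColours B ⟨s(a, b), hab⟩) + (#(B a) + #(B b)) := by
  have hcover : univ ⊆ allowedColours B ⟨s(a, b), hab⟩ ∪ (B a ∪ B b) := by
    intro c _
    by_cases hc : c ∈ B a ∪ B b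
    · exact mem_union_right _ hc
    · rw [mem_union, not_or] at hc
      exact mem_union_left _ (mem_allowedColours.2 (by simpa using hc))
  exact (card_le_card hcover).trans <|
    (card_union_le _ _).trans (Nat.add_le_add_left (card_union_le _ _) _)

theorem sum_cost_colouringObstructionsAt_le (hdeg : ∀ v, L.degree v ≤ D) {β : ℝ} (hβ : 0 ≤ β)
    (w : L.edgeSet) :
    ∑ τ ∈ colouringObstructionsAt B w, τ.cost β ≤
      #(adjacentEdges w) + (2 + (2 * D : ℕ) * (4 / β)) := by
  refine (sum_cost_union_le _ _ hβ).trans (add_le_add ?_ ((sum_cost_union_le _ _ hβ).trans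
    (add_le_add ?_ ?_)))
  · refine (sum_cost_image_le _ hβ fun e _ => ?_).trans_eq (mul_one _)
    simp [Obstruction.cost, clash]
  · refine (sum_cost_image_le (x := 1) _ hβ fun p _ => ?_).trans ?_
    · simp [Obstruction.cost, tie]
    · rw [mul_one]
      exact_mod_cast card_loneAwayPairs_le w
  · refine (sum_cost_image_le (x := 4 / β) _ hβ fun p _ => ?_).trans ?_
    · norm_num [Obstruction.cost, tie]
    · gcongr
      refine (card_le_card fun p hp => ?_).trans
        (card_adj_fst_mem_le Function.injective_id hdeg w.1)
      obtain ⟨-, hadj, hw, -⟩ := mem_filter.1 hp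
      exact mem_filter.2 ⟨mem_univ _, hadj, (mem_awayEdges.1 hw).1⟩

theorem exists_not_isFlawed (hD : 3240 ≤ D) (hC : D ≤ Fintype.card C)
    (hdeg : ∀ v, 0 < L.degree v → 20 * (#(B v) + L.degree v) ≤ 9 * D) :
    ∃ f : L.edgeSet → C, (∀ e, f e ∈ allowedColours B e) ∧ ¬ IsFlawed B fun e => some (f e) := by
  have hD₀ : (3240 : ℝ) ≤ D := by exact_mod_cast hD
  have hβ : (0 : ℝ) < D / 20 := by positivity
  have hdeg_le (v) : L.degree v ≤ D := by
    obtain hv | hv := (L.degree v).eq_zero_or_pos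
    · omega
    · have := hdeg v hv
      omega
  refine exists_assignment_not_bad hβ (fun f g => IsFlawed.mono) not_isFlawed_none
    (colouringObstructionsAt B) (fun w => colouringObstructionsAt_isBounded w _)
    (fun w f => exists_mem_colouringObstructionsAt_hits) ?_
  rintro ⟨⟨a, b⟩, hab⟩
  have ha := hdeg a ((L.degree_pos_iff_exists_adj a).2 ⟨b, hab⟩)
  have hb := hdeg b ((L.degree_pos_iff_exists_adj b).2 ⟨a, SimpleGraph.Adj.symm hab⟩)
  have hlist := card_le_card_allowedColours (B := B) hab
  have hadj := card_adjacentEdges_le hab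
  have hroom : (20 * #(adjacentEdges ⟨s(a, b), hab⟩) + 2 * D : ℝ) ≤
      20 * #(allowedColours B ⟨s(a, b), hab⟩) := by
    exact_mod_cast (by omega)
  have htie : ((2 * D : ℕ) * (4 / (D / 20)) : ℝ) = 160 := by
    push_cast
    field_simp
    norm_num
  have hcost := sum_cost_colouringObstructionsAt_le (B := B) hdeg_le hβ.le ⟨s(a, b), hab⟩
  change _ ≤ (#(allowedColours B ⟨s(a, b), hab⟩) : ℝ)
  linarith

end ListColouring

section Contraction

variable {V W : Type*} [Fintype V] {G : SimpleGraph V} {S : Set V} {π : V → W} {u w : V} {y : W}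
  {F : Finset (Sym2 V)} {K m : ℕ}

/-- The map `π` identifies at most two vertices at a time, and no vertex of `S` with another one. -/
structure IsPairing (S : Set V) (π : V → W) : Prop where
  eq_of_mem : ∀ u ∈ S, ∀ x, π u = π x → u = x
  card_fiber_le : ∀ y, #{x | π x = y} ≤ 2

theorem IsPairing.injOn (hπ : IsPairing S π) : S.InjOn π := fun u hu v _ => hπ.eq_of_mem u hu v

theorem IsPairing.mem_map_iff (hπ : IsPairing S π) (hu : u ∈ S) {e : Sym2 V} :
    π u ∈ e.map π ↔ u ∈ e := by
  refine ⟨fun h => ?_, fun h => Sym2.mem_map.2 ⟨u, h, rfl⟩⟩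
  obtain ⟨x, hx, hxu⟩ := Sym2.mem_map.1 h
  rwa [hπ.eq_of_mem u hu x hxu.symm]

theorem IsPairing.card_fiber_le_one (hπ : IsPairing S π) (hu : u ∈ S) :
    #{x | π x = π u} ≤ 1 := by
  have h {x} (hx : x ∈ ({x | π x = π u} : Finset V)) : u = x :=
    hπ.eq_of_mem u hu x (mem_filter.1 hx).2.symm
  exact card_le_one.2 fun a ha b hb => (h ha).symm.trans (h hb)

theorem IsPairing.card_filter_mem_map_le (hπ : IsPairing S π)
    (hm : ∀ x, π x = y → #{e ∈ F | x ∈ e} ≤ m) : #{e ∈ F | y ∈ e.map π} ≤ 2 * m := by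
  calc #{e ∈ F | y ∈ e.map π}
      ≤ #(({x | π x = y} : Finset V).biUnion fun x => {e ∈ F | x ∈ e}) :=
        card_le_card fun e he => by
          obtain ⟨heF, hy⟩ := mem_filter.1 he
          obtain ⟨x, hx, hxy⟩ := Sym2.mem_map.1 hy
          exact mem_biUnion.2 ⟨x, mem_filter.2 ⟨mem_univ x, hxy⟩, mem_filter.2 ⟨heF, hx⟩⟩
    _ ≤ #({x | π x = y} : Finset V) * m :=
        card_biUnion_le_card_mul _ _ _ fun x hx => hm x (mem_filter.1 hx).2
    _ ≤ 2 * m := Nat.mul_le_mul_right m (hπ.card_fiber_le y)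

theorem IsPairing.card_filter_map_eq_le (hπ : IsPairing S π) (hw : w ∈ S) :
    #{e ∈ F | e.map π = s(π w, y)} ≤ #{x | π x = y} := by
  refine (card_le_card fun e he => ?_).trans (card_image_le (f := fun x => s(w, x)))
  have he := (mem_filter.1 he).2
  obtain ⟨x, rfl⟩ := Sym2.mem_iff_exists.1
    ((hπ.mem_map_iff hw).1 (he ▸ Sym2.mem_mk_left (π w) y))
  exact mem_image.2 ⟨x, mem_filter.2 ⟨mem_univ x, Sym2.congr_right.1 he⟩, rfl⟩

theorem IsPairing.exists_isProperOn [Finite W] (hπ : IsPairing S π) (hF : F ⊆ edgesMeeting G S)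
    (hS : ∀ u ∈ S, #{e ∈ F | u ∈ e} + 1 ≤ K)
    (hrest : ∀ y ∉ π '' S, #{e ∈ F | y ∈ e.map π} + 2 ≤ K) :
    ∃ c, IsProperOn (Sym2.map π) K F c := by
  have hS' : ∀ u ∈ S, #{e ∈ F | π u ∈ e.map π} + 1 ≤ K := fun u hu => by
    simpa only [hπ.mem_map_iff hu] using hS u hu
  have hend : ∀ e ∈ F, ∃ w ∈ S, ∃ x, e = s(w, x) ∧ w ≠ x := fun e he => by
    obtain ⟨heG, w, hwe, hw⟩ := mem_edgesMeeting.1 (hF he)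
    obtain ⟨x, rfl⟩ := Sym2.mem_iff_exists.1 hwe
    exact ⟨w, hw, x, rfl, G.ne_of_adj heG⟩
  refine AVD.exists_isProperOn (fun e he => ?_) (fun y => ?_) fun e he => ?_
  · obtain ⟨w, hw, x, rfl, hwx⟩ := hend e he
    exact fun h => hwx (hπ.eq_of_mem w hw x h)
  · by_cases hy : y ∈ π '' S
    · obtain ⟨u, hu, rfl⟩ := hy
      exact (Nat.le_succ _).trans (hS' u hu)
    · exact (Nat.le_add_right _ 2).trans (hrest y hy)
  · obtain ⟨w, hw, x, rfl, -⟩ := hend e he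
    refine ⟨π w, Sym2.mem_mk_left _ _, fun y _ => ?_⟩
    have hmult := hπ.card_filter_map_eq_le (F := F) (y := y) hw
    by_cases hy : y ∈ π '' S
    · obtain ⟨u, hu, rfl⟩ := hy
      exact (Nat.add_le_add_left (hmult.trans (hπ.card_fiber_le_one hu)) _).trans (hS' u hu)
    · exact (Nat.add_le_add_left (hmult.trans (hπ.card_fiber_le y)) _).trans (hrest y hy)

end Contraction

section Recolouring

variable {E W : Type*} {ends : E → Sym2 W} {F H : Finset E} {c c' : E → ℕ} {K K' : ℕ}

/-- The colouring `c`, except that the edges in `H` are coloured by `c'` shifted by `K`. -/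
noncomputable def recolour (c : E → ℕ) (K : ℕ) (H : Finset E) (c' : E → ℕ) (e : E) : ℕ :=
  if e ∈ H then K + c' e else c e

theorem IsProperOn.recolour (hc : IsProperOn ends K F c) (hc' : IsProperOn ends K' H c') :
    IsProperOn ends (K + K') F (recolour c K H c') where
  lt e he := by
    have := hc.lt e he
    have := hc'.lt e
    grind [AVD.recolour]
  eq_of_eq e he e' he' v hv hv' h := by
    have := hc.lt e he
    have := hc.lt e' he'
    have := hc.eq_of_eq e he e' he' v hv hv'
    have := fun he he' => hc'.eq_of_eq e he e' he' v hv hv'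
    grind [AVD.recolour]

theorem filter_lt_image_recolour [DecidableEq E] (hc : ∀ e ∈ F, c e < K) :
    {n ∈ F.image (recolour c K H c') | n < K} = (F \ H).image c := by
  ext n
  simp only [mem_filter, mem_image, mem_sdiff]
  constructor
  · rintro ⟨⟨e, he, rfl⟩, hn⟩
    have heH : e ∉ H := fun h => by simp [recolour, h] at hn
    exact ⟨e, ⟨he, heH⟩, by simp [recolour, heH]⟩
  · rintro ⟨e, ⟨he, heH⟩, rfl⟩
    exact ⟨⟨e, he, by simp [recolour, heH]⟩, hc e he⟩

end Recolouring

section EdgesMeetingHighVertices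

variable {V W : Type*} [Fintype V] {G : SimpleGraph V} {S : Set V} {π : V → W} {D q : ℕ}
  {f : S × Bool → Sym2 V}

/-- Vertices of degree more than `9 * D / 20`, so that two vertices outside this set have total
degree less than `D`. -/
def highVertices (G : SimpleGraph V) (D : ℕ) : Set V := {v | 9 * D < 20 * G.degree v}

theorem card_filter_mem_edgesMeeting_le (v : V) : #{e ∈ edgesMeeting G S | v ∈ e} ≤ G.degree v := by
  rw [← G.card_incidenceFinset_eq_degree]
  refine card_le_card fun e he => (G.mem_incidenceFinset v e).2 ?_
  exact ⟨(mem_edgesMeeting.1 (mem_filter.1 he).1).1, (mem_filter.1 he).2⟩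

theorem card_filter_mem_map_edgesMeeting_le (hπ : IsPairing (highVertices G D) π) {y : W}
    (hy : y ∉ π '' highVertices G D) :
    10 * #{e ∈ edgesMeeting G (highVertices G D) | y ∈ e.map π} ≤ 9 * D := by
  have hlow := hπ.card_filter_mem_map_le (F := edgesMeeting G (highVertices G D)) (y := y)
    (m := 9 * D / 20) fun x hx => by
      have hx : ¬ 9 * D < 20 * G.degree x := fun h => hy ⟨x, h, hx⟩
      have := card_filter_mem_edgesMeeting_le (G := G) (S := highVertices G D) x
      omega
  omega

theorem exists_isProperOn_selection [Finite W] (hπ : IsPairing S π)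
    (hf : ∀ i, f i ∈ G.incidenceFinset i.1)
    (hq : ∀ y, #(incoming π (fun i => some (f i)) y) ≤ q) :
    ∃ c, IsProperOn (Sym2.map π) (q + 3) (univ.image f) c := by
  refine hπ.exists_isProperOn (G := G) (image_subset_iff.2 fun i _ =>
    incidenceFinset_subset_edgesMeeting i.1.2 (hf i)) (fun u hu => ?_) fun y hy => ?_
  · have hchosen := card_chosenAt_le (f := fun i => some (f i)) hπ.injOn ⟨u, hu⟩
    have hsub : #{e ∈ univ.image f | u ∈ e} ≤ #(chosenAt (fun i => some (f i)) u) :=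
      card_le_card fun e he => by simpa [mem_chosenAt, and_comm] using he
    have := hq (π u)
    dsimp only at hchosen
    omega
  · have hsub : {e ∈ univ.image f | y ∈ e.map π} ⊆
        (incoming π (fun i => some (f i)) y).image f := fun e he => by
      obtain ⟨he, hye⟩ := mem_filter.1 he
      obtain ⟨i, -, rfl⟩ := mem_image.1 he
      exact mem_image_of_mem f (mem_incoming.2 ⟨fun h => hy ⟨i.1, i.1.2, h⟩, f i, rfl, hye⟩)
    have := (card_le_card hsub).trans card_image_le
    have := hq y
    omega

theorem incidenceFinset_sdiff_chosenAt (u : V) :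
    G.incidenceFinset u \ chosenAt (fun i => some (f i)) u =
      G.incidenceFinset u \ univ.image f := by
  ext e
  rw [mem_sdiff, mem_sdiff]
  refine and_congr_right fun he => not_congr ?_
  simp [mem_chosenAt, ((G.mem_incidenceFinset u e).1 he).2]

theorem image_recolour_ne {c c' : Sym2 V → ℕ} (hf : ∀ i, f i ∈ G.incidenceFinset i.1)
    (husable : ¬ IsUnusable G π c q fun i => some (f i))
    (hc : ∀ e ∈ edgesMeeting G S, c e < D) {u v : V} (hu : u ∈ S) (hv : v ∈ S)
    (huv : G.Adj u v) :
    (G.incidenceFinset u).image (recolour c D (univ.image f) c') ≠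
      (G.incidenceFinset v).image (recolour c D (univ.image f) c') := by
  intro h
  have hold {x} (hx : x ∈ S) :=
    filter_lt_image_recolour (H := univ.image f) (c' := c') fun e he =>
      hc e (incidenceFinset_subset_edgesMeeting hx he)
  refine husable (.inr ⟨⟨u, hu⟩, ⟨v, hv⟩, huv, _, Subset.rfl, _, Subset.rfl, fun b => ?_, ?_⟩)
  · have hmem := (G.mem_incidenceFinset _ _).1 (hf (⟨u, hu⟩, b))
    exact ⟨_, mem_chosenAt.2 ⟨hmem.2, _, rfl⟩, rfl⟩
  · rw [incidenceFinset_sdiff_chosenAt, incidenceFinset_sdiff_chosenAt, ← hold hu, ← hold hv, h]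

theorem exists_isProperOn_edgesMeeting [Finite W] (hπ : IsPairing (highVertices G D) π)
    (hdeg : ∀ v, G.degree v ≤ D) (hD : 10 ^ 12 ≤ D) :
    ∃ c, IsProperOn (Sym2.map π) (D + 19) (edgesMeeting G (highVertices G D)) c ∧
      ∀ u ∈ highVertices G D, ∀ v ∈ highVertices G D, G.Adj u v →
        (G.incidenceFinset u).image c ≠ (G.incidenceFinset v).image c := by
  have hhigh (u) := (card_filter_mem_edgesMeeting_le (S := highVertices G D) u).trans (hdeg u)
  have hclass (y) : #{e ∈ edgesMeeting G (highVertices G D) | y ∈ e.map π} ≤ D := by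
    by_cases hy : y ∈ π '' highVertices G D
    · obtain ⟨u, hu, rfl⟩ := hy
      simpa only [hπ.mem_map_iff hu] using hhigh u
    · have := card_filter_mem_map_edgesMeeting_le hπ hy
      omega
  obtain ⟨c, hc⟩ := hπ.exists_isProperOn (K := D + 1) Subset.rfl
    (fun u _ => Nat.succ_le_succ (hhigh u)) fun y hy => by
      have := card_filter_mem_map_edgesMeeting_le hπ hy
      omega
  have hinj : ∀ u ∈ highVertices G D, Set.InjOn c (G.incidenceFinset u) := fun u hu e he e' he' =>
    hc.eq_of_eq e (incidenceFinset_subset_edgesMeeting hu he) e'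
      (incidenceFinset_subset_edgesMeeting hu he') (π u)
      (Sym2.mem_map.2 ⟨u, ((G.mem_incidenceFinset u e).1 he).2, rfl⟩)
      (Sym2.mem_map.2 ⟨u, ((G.mem_incidenceFinset u e').1 he').2, rfl⟩)
  obtain ⟨f, hf, husable⟩ := exists_selection hπ.injOn hinj (fun u hu => hu) hdeg hclass hD
  obtain ⟨c', hc'⟩ := exists_isProperOn_selection (q := 15) hπ hf fun y =>
    not_lt.1 fun h => husable (.inl ⟨y, h⟩)
  exact ⟨_, hc.recolour hc', fun u hu v hv => image_recolour_ne hf husable hc.lt hu hv⟩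

end EdgesMeetingHighVertices

section ColourSets

variable {V : Type*} {G : SimpleGraph V} {c : Sym2 V → ℕ} {u v : V} {e e' : Sym2 V} {n : ℕ}

theorem mem_colorSet : n ∈ colorSet G c u ↔ ∃ e ∈ G.edgeSet, u ∈ e ∧ c e = n := by
  constructor
  · rintro ⟨v, huv, hn⟩
    exact ⟨s(u, v), huv, Sym2.mem_mk_left u v, hn⟩
  · rintro ⟨e, he, hue, hn⟩
    obtain ⟨v, rfl⟩ := Sym2.mem_iff_exists.1 hue
    exact ⟨v, he, hn⟩

theorem eq_of_mem_of_colour_eq (hc : ProperEdgeColoring G c) (he : e ∈ G.edgeSet)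
    (he' : e' ∈ G.edgeSet) (hu : u ∈ e) (hu' : u ∈ e') (h : c e = c e') : e = e' :=
  by_contra fun hne => hc e he e' he' hne ⟨u, hu, hu'⟩ h

theorem mem_colorSet_and_ne_iff (hc : ProperEdgeColoring G c) (huv : G.Adj u v) :
    n ∈ colorSet G c u ∧ n ≠ c s(u, v) ↔ ∃ e ∈ G.edgeSet, u ∈ e ∧ v ∉ e ∧ c e = n := by
  rw [mem_colorSet]
  constructor
  · rintro ⟨⟨e, he, hue, rfl⟩, hne⟩
    refine ⟨e, he, hue, fun hve => hne ?_, rfl⟩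
    rw [(Sym2.mem_and_mem_iff huv.ne).1 ⟨hue, hve⟩]
  · rintro ⟨e, he, hue, hve, rfl⟩
    refine ⟨⟨e, he, hue, rfl⟩, fun h => hve ?_⟩
    rw [eq_of_mem_of_colour_eq hc he huv hue (Sym2.mem_mk_left u v) h]
    exact Sym2.mem_mk_right u v

variable [Fintype V]

theorem coe_image_incidenceFinset : ((G.incidenceFinset u).image c : Set ℕ) = colorSet G c u := by
  ext n
  simp [mem_colorSet, SimpleGraph.incidenceSet, and_assoc]

theorem degree_eq_of_colorSet_eq (hc : ProperEdgeColoring G c)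
    (h : colorSet G c u = colorSet G c v) : G.degree u = G.degree v := by
  have hcard (x : V) : (colorSet G c x).ncard = G.degree x := by
    rw [← coe_image_incidenceFinset, Set.ncard_coe_finset, card_image_of_injOn,
      G.card_incidenceFinset_eq_degree]
    intro e he e' he'
    rw [mem_coe, G.mem_incidenceFinset] at he he'
    exact eq_of_mem_of_colour_eq hc he.1 he'.1 he.2 he'.2
  rw [← hcard u, ← hcard v, h]

end ColourSets

section IsolatedEdges

variable {V : Type*} {L : SimpleGraph V} {S : Set V} {u v : V}

/-- No edge of `L` is adjacent to the edge `uv`. -/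
structure IsIsolatedEdge (L : SimpleGraph V) (u v : V) : Prop where
  adj : L.Adj u v
  eq_right : ∀ z, L.Adj u z → z = v
  eq_left : ∀ z, L.Adj v z → z = u

theorem IsIsolatedEdge.symm (h : IsIsolatedEdge L u v) : IsIsolatedEdge L v u :=
  ⟨h.adj.symm, h.eq_left, h.eq_right⟩

/-- The map that contracts every isolated edge of `L`, sending a vertex to the set of vertices it
is identified with. -/
def contraction (L : SimpleGraph V) (u : V) : Set V := {x | x = u ∨ IsIsolatedEdge L u x}

theorem contraction_eq (h : IsIsolatedEdge L u v) : contraction L u = contraction L v := by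
  have hsub {u v} (h : IsIsolatedEdge L u v) : contraction L u ⊆ contraction L v := by
    rintro x (rfl | hx)
    · exact .inr h.symm
    · exact .inl (h.eq_right x hx.adj)
  exact (hsub h).antisymm (hsub h.symm)

theorem isIsolatedEdge_of_contraction_eq (h : contraction L u = contraction L v) (hne : u ≠ v) :
    IsIsolatedEdge L u v :=
  (h ▸ .inl rfl : v ∈ contraction L u).resolve_left hne.symm

theorem isPairing_contraction [Fintype V] (hS : ∀ u v, L.Adj u v → u ∉ S) :
    IsPairing S (contraction L) where
  eq_of_mem u hu x h :=
    by_contra fun hne => hS u x (isIsolatedEdge_of_contraction_eq h hne).adj hu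
  card_fiber_le y := by
    by_contra! hcard
    obtain ⟨a, b, c, ha, hb, hc, hab, hac, hbc⟩ := two_lt_card_iff.1 hcard
    have ha := (mem_filter.1 ha).2
    have hb := isIsolatedEdge_of_contraction_eq (ha.trans (mem_filter.1 hb).2.symm) hab
    have hc := isIsolatedEdge_of_contraction_eq (ha.trans (mem_filter.1 hc).2.symm) hac
    exact hbc (hc.eq_right b hb.adj)

theorem nonempty_awayEdges_union [Fintype V] (huv : L.Adj u v) (h : ¬ IsIsolatedEdge L u v) :
    (awayEdges L u v ∪ awayEdges L v u).Nonempty := by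
  have hmem {u v z} (huv : L.Adj u v) (hz : L.Adj u z) (hzv : z ≠ v) :
      ⟨s(u, z), hz⟩ ∈ awayEdges L u v :=
    mem_awayEdges.2 ⟨Sym2.mem_mk_left u z, by simp [huv.ne', hzv.symm]⟩
  by_contra hempty
  refine h ⟨huv, fun z hz => ?_, fun z hz => ?_⟩ <;> by_contra hne
  · exact hempty ⟨_, mem_union_left _ (hmem huv hz hne)⟩
  · exact hempty ⟨_, mem_union_right _ (hmem huv.symm hz hne)⟩

end IsolatedEdges

section Merging

variable {V : Type*} [Fintype V] {G : SimpleGraph V} {S : Set V} {c : Sym2 V → ℕ} {u v : V}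
  {e : Sym2 V} {K : ℕ}

/-- The graph formed by the edges of `G` that have no end in `S`. -/
def avoiding (G : SimpleGraph V) (S : Set V) : SimpleGraph V := G.deleteEdges (edgesMeeting G S)

theorem mem_edgeSet_avoiding :
    e ∈ (avoiding G S).edgeSet ↔ e ∈ G.edgeSet ∧ e ∉ edgesMeeting G S := by
  rw [avoiding, SimpleGraph.edgeSet_deleteEdges, Set.mem_sdiff, mem_coe]

theorem avoiding_adj : (avoiding G S).Adj u v ↔ G.Adj u v ∧ u ∉ S ∧ v ∉ S := by
  refine SimpleGraph.deleteEdges_adj.trans (and_congr_right fun h => ?_)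
  simp [mem_edgesMeeting, h]

/-- The colours below `K` that `c` uses at `v` on edges with an end in `S`. -/
noncomputable def coloursFrom (G : SimpleGraph V) (S : Set V) (K : ℕ) (c : Sym2 V → ℕ) (v : V) :
    Finset (Fin K) :=
  {n | ∃ e ∈ edgesMeeting G S, v ∈ e ∧ c e = n}

theorem mem_coloursFrom {n : Fin K} :
    n ∈ coloursFrom G S K c v ↔ ∃ e ∈ edgesMeeting G S, v ∈ e ∧ c e = n := by
  simp [coloursFrom]

theorem card_coloursFrom_add_degree_le (c : Sym2 V → ℕ) (v : V) :
    #(coloursFrom G S K c v) + (avoiding G S).degree v ≤ G.degree v := by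
  have hcolours : #(coloursFrom G S K c v) ≤ #{e ∈ edgesMeeting G S | v ∈ e} := by
    calc #(coloursFrom G S K c v) = #((coloursFrom G S K c v).map Fin.valEmbedding) :=
          (card_map _).symm
      _ ≤ #({e ∈ edgesMeeting G S | v ∈ e}.image c) := card_le_card fun n hn => by
          obtain ⟨m, hm, rfl⟩ := mem_map.1 hn
          obtain ⟨e, he, hve, hce⟩ := mem_coloursFrom.1 hm
          exact mem_image.2 ⟨e, mem_filter.2 ⟨he, hve⟩, hce⟩
      _ ≤ _ := card_image_le
  have hdisj : Disjoint {e ∈ edgesMeeting G S | v ∈ e} ((avoiding G S).incidenceFinset v) :=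
    disjoint_left.2 fun e he he' => (mem_edgeSet_avoiding.1
      (((avoiding G S).mem_incidenceFinset v e).1 he').1).2 (mem_filter.1 he).1
  have hsub : {e ∈ edgesMeeting G S | v ∈ e} ∪ (avoiding G S).incidenceFinset v ⊆
      G.incidenceFinset v := fun e he => by
    rw [G.mem_incidenceFinset]
    obtain he | he := mem_union.1 he
    · exact ⟨(mem_edgesMeeting.1 (mem_filter.1 he).1).1, (mem_filter.1 he).2⟩
    · rw [SimpleGraph.mem_incidenceFinset] at he
      exact ⟨(mem_edgeSet_avoiding.1 he.1).1, he.2⟩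
  rw [← G.card_incidenceFinset_eq_degree, ← (avoiding G S).card_incidenceFinset_eq_degree]
  refine (Nat.add_le_add_right hcolours _).trans ?_
  rw [← card_union_of_disjoint hdisj]
  exact card_le_card hsub

/-- The colouring `c` of the edges meeting `S`, together with the colouring `f` of the others. -/
noncomputable def merge (c : Sym2 V → ℕ) (f : (avoiding G S).edgeSet → Fin K) (e : Sym2 V) : ℕ :=
  if h : e ∈ (avoiding G S).edgeSet then f ⟨e, h⟩ else c e

variable {f : (avoiding G S).edgeSet → Fin K}

theorem merge_coe (e : (avoiding G S).edgeSet) : merge c f e = f e := dif_pos e.2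

theorem merge_of_mem (he : e ∈ edgesMeeting G S) : merge c f e = c e :=
  dif_neg fun h => (mem_edgeSet_avoiding.1 h).2 he

theorem mem_edgesMeeting_or_avoiding (he : e ∈ G.edgeSet) :
    e ∈ edgesMeeting G S ∨ e ∈ (avoiding G S).edgeSet :=
  (em _).imp_right fun h => mem_edgeSet_avoiding.2 ⟨he, h⟩

theorem mem_palette_awayEdges (huv : (avoiding G S).Adj u v) {n : Fin K} :
    n ∈ palette (coloursFrom G S K c u) (fun e => some (f e)) (awayEdges (avoiding G S) u v) ↔
      ∃ e ∈ G.edgeSet, u ∈ e ∧ v ∉ e ∧ merge c f e = n := by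
  rw [mem_palette, mem_coloursFrom]
  constructor
  · rintro (⟨e, he, hue, hn⟩ | ⟨e, he, hn⟩)
    · refine ⟨e, (mem_edgesMeeting.1 he).1, hue, fun hve => ?_, (merge_of_mem he).trans hn⟩
      obtain rfl := (Sym2.mem_and_mem_iff huv.ne).1 ⟨hue, hve⟩
      exact (mem_edgeSet_avoiding.1 huv).2 he
    · obtain ⟨hue, hve⟩ := mem_awayEdges.1 he
      refine ⟨e, (mem_edgeSet_avoiding.1 e.2).1, hue, hve, ?_⟩
      rw [merge_coe, Option.some.inj hn]
  · rintro ⟨e, he, hue, hve, hn⟩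
    obtain h | h := mem_edgesMeeting_or_avoiding (S := S) he
    · exact .inl ⟨e, h, hue, (merge_of_mem h).symm.trans hn⟩
    · refine .inr ⟨⟨e, h⟩, mem_awayEdges.2 ⟨hue, hve⟩, ?_⟩
      exact congrArg some (Fin.ext ((merge_coe ⟨e, h⟩).symm.trans hn))

/-- The colouring `c` of the edges meeting `S` and the colouring `f` of the others fit together:
the first colours properly even after contraction of the isolated edges of the second graph, and
the second avoids the colours of the first and distinguishes the ends of all other edges. -/
structure IsCompatible (c : Sym2 V → ℕ) (f : (avoiding G S).edgeSet → Fin K) : Prop where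
  isProperOn : IsProperOn (Sym2.map (contraction (avoiding G S))) K (edgesMeeting G S) c
  mem_allowedColours : ∀ e, f e ∈ allowedColours (coloursFrom G S K c) e
  not_isFlawed : ¬ IsFlawed (coloursFrom G S K c) fun e => some (f e)

theorem IsCompatible.merge_lt (h : IsCompatible c f) (he : e ∈ G.edgeSet) : merge c f e < K := by
  obtain he | he := mem_edgesMeeting_or_avoiding (S := S) he
  · rw [merge_of_mem he]
    exact h.isProperOn.lt e he
  · rw [merge_coe ⟨e, he⟩]
    exact (f ⟨e, he⟩).2

theorem IsCompatible.merge_ne (h : IsCompatible c f) {e' : Sym2 V} (he : e ∈ edgesMeeting G S)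
    (he' : e' ∈ (avoiding G S).edgeSet) (hu : u ∈ e) (hu' : u ∈ e') :
    merge c f e ≠ merge c f e' := fun heq => by
  rw [merge_of_mem he, merge_coe ⟨e', he'⟩] at heq
  exact AVD.mem_allowedColours.1 (h.mem_allowedColours ⟨e', he'⟩) u hu'
    (mem_coloursFrom.2 ⟨e, he, hu, heq⟩)

theorem IsCompatible.eq_of_merge_eq (h : IsCompatible c f) {e' : Sym2 V}
    (he : e ∈ edgesMeeting G S) (he' : e' ∈ edgesMeeting G S) (hu : u ∈ e) (hv : v ∈ e')
    (huv : contraction (avoiding G S) u = contraction (avoiding G S) v)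
    (heq : merge c f e = merge c f e') : e = e' := by
  rw [merge_of_mem he, merge_of_mem he'] at heq
  exact h.isProperOn.eq_of_eq e he e' he' _ (Sym2.mem_map.2 ⟨u, hu, rfl⟩)
    (Sym2.mem_map.2 ⟨v, hv, huv.symm⟩) heq

theorem IsCompatible.properEdgeColoring (h : IsCompatible c f) :
    ProperEdgeColoring G (merge c f) := by
  rintro e he e' he' hne ⟨u, hu, hu'⟩ heq
  obtain he | he := mem_edgesMeeting_or_avoiding (S := S) he <;>
    obtain he' | he' := mem_edgesMeeting_or_avoiding (S := S) he'
  · exact hne (h.eq_of_merge_eq he he' hu hu' rfl heq)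
  · exact h.merge_ne he he' hu hu' heq
  · exact h.merge_ne he' he hu' hu heq.symm
  · refine h.not_isFlawed (.inl ⟨⟨e, he⟩, ⟨e', he'⟩, fun h => hne (congrArg Subtype.val h),
      ⟨u, hu, hu'⟩, Option.some_ne_none _, ?_⟩)
    rw [merge_coe ⟨e, he⟩, merge_coe ⟨e', he'⟩] at heq
    exact congrArg some (Fin.ext heq)

theorem IsCompatible.colorSet_ne_of_not_isIsolatedEdge (h : IsCompatible c f)
    (huv : (avoiding G S).Adj u v) (hiso : ¬ IsIsolatedEdge (avoiding G S) u v) :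
    colorSet G (merge c f) u ≠ colorSet G (merge c f) v := fun heq => by
  have hadj : G.Adj u v := (avoiding_adj.1 huv).1
  refine h.not_isFlawed (.inr ⟨u, v, huv, nonempty_awayEdges_union huv hiso,
    fun _ _ => Option.some_ne_none _, ?_⟩)
  ext n
  rw [mem_palette_awayEdges huv, mem_palette_awayEdges huv.symm,
    ← mem_colorSet_and_ne_iff h.properEdgeColoring hadj,
    ← mem_colorSet_and_ne_iff h.properEdgeColoring hadj.symm, heq, Sym2.eq_swap]

theorem IsCompatible.colorSet_ne_of_isIsolatedEdge (h : IsCompatible c f)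
    (hiso : IsIsolatedEdge (avoiding G S) u v) {z : V} (hz : G.Adj u z) (hzv : z ≠ v) :
    colorSet G (merge c f) u ≠ colorSet G (merge c f) v := fun heq => by
  have huv : G.Adj u v := (avoiding_adj.1 hiso.adj).1
  have hve : v ∉ s(u, z) := by simp [huv.ne', hzv.symm]
  obtain ⟨e, he, hv, hcol⟩ := mem_colorSet.1 (heq ▸ ⟨z, hz, rfl⟩ :
    merge c f s(u, z) ∈ colorSet G (merge c f) v)
  have hne : e ≠ s(u, z) := fun h => hve (h ▸ hv)
  have hmeet : s(u, z) ∈ edgesMeeting G S :=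
    (mem_edgesMeeting_or_avoiding hz).resolve_right fun h => hzv (hiso.eq_right z h)
  obtain hemeet | heL := mem_edgesMeeting_or_avoiding (S := S) he
  · exact hne (h.eq_of_merge_eq hemeet hmeet hv (Sym2.mem_mk_left u z)
      (contraction_eq hiso).symm hcol)
  · obtain ⟨x, rfl⟩ := Sym2.mem_iff_exists.1 hv
    obtain rfl := hiso.eq_left x heL
    exact hne (eq_of_mem_of_colour_eq h.properEdgeColoring he hz (Sym2.mem_mk_right v x)
      (Sym2.mem_mk_left x z) hcol)

theorem colorSet_merge_ne (hu : u ∈ S) (hv : v ∈ S)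
    (huv : (G.incidenceFinset u).image c ≠ (G.incidenceFinset v).image c) :
    colorSet G (merge c f) u ≠ colorSet G (merge c f) v := by
  have himage {x} (hx : x ∈ S) :
      (G.incidenceFinset x).image (merge c f) = (G.incidenceFinset x).image c :=
    image_congr fun e he => merge_of_mem (incidenceFinset_subset_edgesMeeting hx he)
  rwa [← coe_image_incidenceFinset, ← coe_image_incidenceFinset, himage hu, himage hv, Ne, coe_inj]

end Merging

section Assembly

variable {V : Type*} [Fintype V] {G : SimpleGraph V} {u v : V} {D K : ℕ} {c : Sym2 V → ℕ}
  {f : (avoiding G (highVertices G D)).edgeSet → Fin K}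

theorem exists_isCompatible (hdeg : ∀ v, G.degree v ≤ D) (hD : 10 ^ 12 ≤ D) :
    ∃ (c : Sym2 V → ℕ) (f : (avoiding G (highVertices G D)).edgeSet → Fin (D + 19)),
      IsCompatible c f ∧ ∀ u ∈ highVertices G D, ∀ v ∈ highVertices G D, G.Adj u v →
        (G.incidenceFinset u).image c ≠ (G.incidenceFinset v).image c := by
  obtain ⟨c, hc, hne⟩ := exists_isProperOn_edgesMeeting
    (isPairing_contraction fun _ _ h => (avoiding_adj.1 h).2.1) hdeg hD
  obtain ⟨f, hf, hflaw⟩ := exists_not_isFlawed (L := avoiding G (highVertices G D)) (D := D)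
    (B := coloursFrom G (highVertices G D) (D + 19) c) (by omega) (by simp) fun v hv => by
      obtain ⟨w, hvw⟩ := ((avoiding G (highVertices G D)).degree_pos_iff_exists_adj v).1 hv
      have hlow : ¬ 9 * D < 20 * G.degree v := (avoiding_adj.1 hvw).2.1
      have := card_coloursFrom_add_degree_le (G := G) (S := highVertices G D) (K := D + 19) c v
      omega
  exact ⟨c, f, ⟨hc, hf, hflaw⟩, hne⟩

theorem exists_adj_ne_of_degree_ne_one (huv : G.Adj u v) (hu : G.degree u ≠ 1) :
    ∃ z, G.Adj u z ∧ z ≠ v := by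
  by_contra! h
  exact hu (G.degree_eq_one_iff_existsUnique_adj.2 ⟨v, huv, h⟩)

theorem IsCompatible.colorSet_ne (h : IsCompatible c f)
    (hhigh : ∀ u ∈ highVertices G D, ∀ v ∈ highVertices G D, G.Adj u v →
      (G.incidenceFinset u).image c ≠ (G.incidenceFinset v).image c)
    (huv : G.Adj u v) (hiso : ¬ (G.degree u = 1 ∧ G.degree v = 1)) :
    colorSet G (merge c f) u ≠ colorSet G (merge c f) v := fun heq => by
  have hdeg := degree_eq_of_colorSet_eq h.properEdgeColoring heq
  have hmem : u ∈ highVertices G D ↔ v ∈ highVertices G D := by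
    simp only [highVertices, Set.mem_ofPred_eq, hdeg]
  by_cases hu : u ∈ highVertices G D
  · exact colorSet_merge_ne hu (hmem.1 hu) (hhigh u hu v (hmem.1 hu) huv) heq
  have hadj : (avoiding G (highVertices G D)).Adj u v :=
    avoiding_adj.2 ⟨huv, hu, fun hv => hu (hmem.2 hv)⟩
  by_cases hisolated : IsIsolatedEdge (avoiding G (highVertices G D)) u v
  · obtain ⟨z, hz, hzv⟩ := exists_adj_ne_of_degree_ne_one huv fun h => hiso ⟨h, hdeg ▸ h⟩
    exact h.colorSet_ne_of_isIsolatedEdge hisolated hz hzv heq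
  · exact h.colorSet_ne_of_not_isIsolatedEdge hadj hisolated heq

end Assembly

end AVD

theorem avd_colouring_delta_plus_19_general {V : Type*} [Fintype V] (G : SimpleGraph V)
    [DecidableRel G.Adj] {D : ℕ} (hD : 10 ^ 12 ≤ D) (hdeg : ∀ v, G.degree v ≤ D)
    (hiso : ∀ u v : V, G.Adj u v → ¬(G.degree u = 1 ∧ G.degree v = 1)) :
    ∃ c : Sym2 V → ℕ,
      ProperEdgeColoring G c ∧
      (∀ e ∈ G.edgeSet, c e < D + 19) ∧
      (∀ u v : V, G.Adj u v → colorSet G c u ≠ colorSet G c v) := by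
  obtain rfl : ‹DecidableRel G.Adj› = fun _ _ => Classical.propDecidable _ := Subsingleton.elim _ _
  obtain ⟨c, f, h, hhigh⟩ := AVD.exists_isCompatible hdeg hD
  exact ⟨AVD.merge c f, h.properEdgeColoring, fun e => h.merge_lt,
    fun u v huv => h.colorSet_ne hhigh huv (hiso u v huv)⟩

/-- There exists an integer `Δ₀ ≥ 0` such that every finite simple graph `G` with maximum
degree `Δ ≥ Δ₀` and no isolated edge has an adjacent vertex distinguishing proper edge
colouring using at most `Δ + 19` colours. -/
theorem avd_colouring_delta_plus_19 :
    ∃ Δ₀ : ℕ,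
      ∀ (V : Type) [Fintype V] [DecidableEq V] (G : SimpleGraph V) [DecidableRel G.Adj],
        Δ₀ ≤ G.maxDegree →
        (∀ u v : V, G.Adj u v → ¬(G.degree u = 1 ∧ G.degree v = 1)) →
        ∃ c : Sym2 V → ℕ,
          ProperEdgeColoring G c ∧
          (∀ e ∈ G.edgeSet, c e < G.maxDegree + 19) ∧
          (∀ u v : V, G.Adj u v → colorSet G c u ≠ colorSet G c v) :=
  ⟨10 ^ 12, fun _ _ _ G _ hD => avd_colouring_delta_plus_19_general G hD G.degree_le_maxDegree⟩
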